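/- arXiv:math/0605578 — 4 statements merged into one kernel-verified Lean document; each statement's English description precedes it below -/
import Mathlib

section
/- Let R be a commutative noetherian ring, M an R-module, and p ⊆ q prime ideals of R. If the Gorenstein injective dimension Gid_{R_p}(M_p) is finite, then Gid_{R_p}(M_p) ≤ Gid_{R_q}(M_q). -/
universe u

/-- `G` is Gorenstein injective: there is an exact complex of injective modules
`⋯ → I 1 → I 0 → I (-1) → ⋯` which stays exact after applying `Hom_R(J, -)` for every
injective module `J`, such that `G` is the kernel of `I 0 → I (-1)`. -/
def IsGorensteinInjective (R : Type u) [CommRing R]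
    (G : Type u) [AddCommGroup G] [Module R G] : Prop :=
  ∃ (I : ℤ → Type u) (_ : ∀ n, AddCommGroup (I n)) (_ : ∀ n, Module R (I n))
    (d : ∀ n : ℤ, I (n + 1) →ₗ[R] I n),
    (∀ n, Module.Injective R (I n)) ∧
    (∀ n : ℤ, Function.Exact (d (n + 1)) (d n)) ∧
    (∀ (J : Type u) (_ : AddCommGroup J) (_ : Module R J), Module.Injective R J →
      ∀ (n : ℤ) (f : J →ₗ[R] I (n + 1)), (d n).comp f = 0 →
        ∃ g : J →ₗ[R] I (n + 1 + 1), (d (n + 1)).comp g = f) ∧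
    Nonempty (G ≃ₗ[R] LinearMap.ker (d (-1)))

/-- The Gorenstein injective dimension of `M`, as an element of the extended (integer) line:
the infimum of the lengths `n` of exact sequences `0 → M → G 0 → ⋯ → G n → 0`
with each `G j` Gorenstein injective (`sInf ∅ = ⊤`). -/
noncomputable def GorensteinInjectiveDimension (R : Type u) [CommRing R]
    (M : Type u) [AddCommGroup M] [Module R M] : EReal :=
  sInf {i : EReal | ∃ n : ℕ, i = (n : EReal) ∧
    ∃ (G : ℕ → Type u) (_ : ∀ j, AddCommGroup (G j)) (_ : ∀ j, Module R (G j))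
      (ε : M →ₗ[R] G 0) (d : ∀ j, G j →ₗ[R] G (j + 1)),
      (∀ j ≤ n, IsGorensteinInjective R (G j)) ∧
      (∀ j, n < j → Subsingleton (G j)) ∧
      Function.Injective ε ∧ Function.Exact ε (d 0) ∧
      ∀ j, Function.Exact (d j) (d (j + 1))}

/-!
Over a noetherian ring the injective dimension of a module `K` of finite injective dimension is
detected by torsion: if `Ext K i` vanishes for `i > d + 1`, then `Ext (R ⧸ p) K (d + 1) = 0` for all
primes `p` as soon as each of these modules becomes zero after localization at `p`. For the latter,
`R ⧸ p` embeds into a module `N` whose high `Ext` groups, into any module at all, vanish after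
localization at `p`. Dimension shifting along a left resolution by injective modules shows that
`Ext N G i` vanishes after localization at `p` for every `i > 0` as soon as `G` has such a
resolution. This applies not only to Gorenstein injective modules but also to their images under an
exact functor preserving injectives, such as localization, although these images need not be
Gorenstein injective.

A module `X` with `Gid X < ∞` has an approximation `0 → L → K → X → 0` with `L` Gorenstein
injective and `K` of finite injective dimension. When `X` is a localization of a module of
Gorenstein injective dimension at most `n`, the groups `Ext N L i` and `Ext N X i`, hence
`Ext N K i`, vanish locally for `i > n`. So `K` has injective dimension at most `n`, and therefore
`Gid X ≤ n`.
-/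

universe v w

namespace GorensteinInjective

open CategoryTheory Abelian Limits

section ShortExact

variable {C : Type u} [Category.{v} C] [Abelian C] {S : ShortComplex C} {E Z : C}

lemma shortExact_of_isPullback (hS : S.ShortExact) {a : E ⟶ S.X₂} {q : E ⟶ Z} {u : Z ⟶ S.X₃}
    (hE : IsPullback a q S.g u) :
    (ShortComplex.mk (hE.lift S.f 0 (by simp)) q (hE.lift_snd _ _ _)).ShortExact := by
  have := hS.epi_g
  have := hS.mono_f
  have : Epi q := Abelian.epi_snd_of_isLimit _ _ hE.isLimit
  have : Mono (hE.lift S.f 0 (by simp)) := mono_of_mono_fac (hE.lift_fst S.f 0 _)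
  refine ⟨ShortComplex.exact_of_f_is_kernel _ (KernelFork.IsLimit.ofι' _ _ fun k hk ↦ ?_)⟩
  have hk' : (k ≫ a) ≫ S.g = 0 := by
    rw [Category.assoc, hE.w, reassoc_of% hk, zero_comp]
  refine ⟨hS.exact.lift _ hk', hE.hom_ext ?_ ?_⟩
  · rw [Category.assoc, hE.lift_fst, hS.exact.lift_f]
  · rw [Category.assoc, hE.lift_snd, comp_zero, hk]

lemma shortExact_comp_of_isPullback (hS : S.ShortExact) {a : E ⟶ Z} {b : E ⟶ S.X₁}
    {p : Z ⟶ S.X₂} [Epi p] (hE : IsPullback a b p S.f) :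
    (ShortComplex.mk a (p ≫ S.g) (by rw [hE.w_assoc, S.zero, comp_zero])).ShortExact := by
  have := hS.epi_g
  have := hS.mono_f
  have : Mono a := hE.mono_fst_of_mono
  refine ⟨ShortComplex.exact_of_f_is_kernel _ (KernelFork.IsLimit.ofι' _ _ fun k hk ↦ ?_)⟩
  have hk' : (k ≫ p) ≫ S.g = 0 := by rwa [Category.assoc]
  exact ⟨hE.lift k (hS.exact.lift _ hk') (hS.exact.lift_f _ hk').symm, hE.lift_fst _ _ _⟩

lemma shortExact_of_isPushout (hS : S.ShortExact) {u : S.X₁ ⟶ Z} {a : S.X₂ ⟶ E} {j : Z ⟶ E}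
    (hE : IsPushout S.f u a j) :
    (ShortComplex.mk j (hE.desc S.g 0 (by simp)) (hE.inr_desc _ _ _)).ShortExact := by
  have := hS.epi_g
  have := hS.mono_f
  have : Mono j := Abelian.mono_inr_of_isColimit _ _ hE.isColimit
  have : Epi (hE.desc S.g 0 (by simp)) := epi_of_epi_fac (hE.inl_desc S.g 0 _)
  refine ⟨ShortComplex.exact_of_g_is_cokernel _ (CokernelCofork.IsColimit.ofπ' _ _ fun k hk ↦ ?_)⟩
  have hk' : S.f ≫ a ≫ k = 0 := by rw [hE.w_assoc, hk, comp_zero]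
  refine ⟨hS.exact.desc _ hk', hE.hom_ext ?_ ?_⟩
  · rw [hE.inl_desc_assoc, hS.exact.g_desc]
  · rw [hE.inr_desc_assoc, zero_comp, hk]

lemma shortExact_comp_of_isPushout (hS : S.ShortExact) {i : S.X₂ ⟶ Z} [Mono i] {a : Z ⟶ E}
    {b : S.X₃ ⟶ E} (hE : IsPushout i S.g a b) :
    (ShortComplex.mk (S.f ≫ i) a (by rw [Category.assoc, hE.w, S.zero_assoc,
      zero_comp])).ShortExact := by
  have := hS.epi_g
  have := hS.mono_f
  have : Epi a := hE.epi_inl_of_epi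
  refine ⟨ShortComplex.exact_of_g_is_cokernel _ (CokernelCofork.IsColimit.ofπ' _ _ fun k hk ↦ ?_)⟩
  have hk' : S.f ≫ i ≫ k = 0 := by rwa [← Category.assoc]
  exact ⟨hE.desc k (hS.exact.desc _ hk') (hS.exact.g_desc _ hk').symm, hE.inl_desc _ _ _⟩

lemma shortExact_of_splitting_swap (s : S.Splitting) :
    (ShortComplex.mk s.s s.r s.s_r).ShortExact :=
  ShortComplex.Splitting.shortExact
    { r := S.g
      s := S.f
      f_r := s.s_g
      s_g := s.f_r
      id := (add_comm _ _).trans s.id }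

lemma exists_comp_eq_of_subsingleton_ext [HasExt.{w} C] (hS : S.ShortExact) {J : C}
    (h : Subsingleton (Ext J S.X₁ 1)) (u : J ⟶ S.X₃) : ∃ v : J ⟶ S.X₂, v ≫ S.g = u := by
  obtain ⟨x, hx⟩ := Ext.covariant_sequence_exact₃ J hS (Ext.mk₀ u) (zero_add 1)
    (Subsingleton.elim _ _)
  obtain ⟨v, rfl⟩ := (Ext.mk₀_bijective _ _).2 x
  rw [Ext.mk₀_comp_mk₀] at hx
  exact ⟨v, (Ext.mk₀_bijective _ _).1 hx⟩

lemma nonempty_splitting_of_subsingleton_ext [HasExt.{w} C] (hS : S.ShortExact)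
    (h : Subsingleton (Ext S.X₃ S.X₁ 1)) : Nonempty S.Splitting := by
  obtain ⟨s, hs⟩ := exists_comp_eq_of_subsingleton_ext hS h (𝟙 S.X₃)
  exact ⟨.ofExactOfSection S hS.exact s hs hS.mono_f⟩

end ShortExact

section InjectivelyCovered

variable {C : Type u} [Category.{v} C] [Abelian C]

/-- The objects `X` which are a quotient of an injective object with kernel in `P`: one step of a
left resolution of `X` by injective objects. -/
def injectivelyCovered (P : ObjectProperty C) : ObjectProperty C :=
  fun X ↦ ∃ (K I : C) (f : K ⟶ I) (g : I ⟶ X) (w : f ≫ g = 0),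
    (ShortComplex.mk f g w).ShortExact ∧ Injective I ∧ P K

lemma injectivelyCovered_mono : Monotone (injectivelyCovered (C := C)) :=
  fun _ _ hPQ _ ⟨K, I, f, g, w, hS, hI, hK⟩ ↦ ⟨K, I, f, g, w, hS, hI, hPQ K hK⟩

lemma injectivelyCovered_X₃_of_shortExact {P : ObjectProperty C} {S : ShortComplex C}
    (hS : S.ShortExact) (hI : Injective S.X₂) (hP : P S.X₁) : injectivelyCovered P S.X₃ :=
  ⟨S.X₁, S.X₂, S.f, S.g, S.zero, hS, hI, hP⟩

instance (P : ObjectProperty C) : (injectivelyCovered P).IsClosedUnderIsomorphisms where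
  of_iso e := fun ⟨K, I, f, g, w, hS, hI, hK⟩ ↦ by
    refine ⟨K, I, f, g ≫ e.hom, by rw [reassoc_of% w, zero_comp],
      ShortComplex.shortExact_of_iso ?_ hS, hI, hK⟩
    exact ShortComplex.isoMk (Iso.refl _) (Iso.refl _) e

/-- The objects `X` with a left resolution `⋯ → I₁ → I₀ → X → 0` by injective objects all of whose
syzygies, including `X`, lie in `Q`; the syzygies are recorded as a class `P` contained in `Q`. -/
def leftInjectivelyResolvable (Q : ObjectProperty C) : ObjectProperty C :=
  fun X ↦ ∃ P ≤ Q, P ≤ injectivelyCovered P ∧ P X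

variable {Q : ObjectProperty C}

lemma leftInjectivelyResolvable_le : leftInjectivelyResolvable Q ≤ Q :=
  fun _ ⟨_, hPQ, _, hX⟩ ↦ hPQ _ hX

lemma leftInjectivelyResolvable_le_injectivelyCovered :
    leftInjectivelyResolvable Q ≤ injectivelyCovered (leftInjectivelyResolvable Q) :=
  fun X ⟨P, hPQ, hP, hX⟩ ↦ injectivelyCovered_mono (fun _ hY ↦ ⟨P, hPQ, hP, hY⟩) X (hP X hX)

lemma le_leftInjectivelyResolvable {P : ObjectProperty C} (hPQ : P ≤ Q)
    (hP : P ≤ injectivelyCovered P) : P ≤ leftInjectivelyResolvable Q :=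
  fun _ hX ↦ ⟨P, hPQ, hP, hX⟩

lemma leftInjectivelyResolvable_mono :
    Monotone (leftInjectivelyResolvable (C := C)) :=
  fun _ _ hQ ↦ le_leftInjectivelyResolvable (leftInjectivelyResolvable_le.trans hQ)
    leftInjectivelyResolvable_le_injectivelyCovered

lemma inf_injectivelyCovered_le_leftInjectivelyResolvable :
    Q ⊓ injectivelyCovered (leftInjectivelyResolvable Q) ≤ leftInjectivelyResolvable Q :=
  le_leftInjectivelyResolvable inf_le_left
    (inf_le_right.trans <| injectivelyCovered_mono <|
      le_inf leftInjectivelyResolvable_le leftInjectivelyResolvable_le_injectivelyCovered)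

lemma isInjective_le_leftInjectivelyResolvable (hQ : isInjective C ≤ Q) :
    isInjective C ≤ leftInjectivelyResolvable Q :=
  le_leftInjectivelyResolvable hQ fun J (_ : Injective J) ↦ injectivelyCovered_X₃_of_shortExact
    (ShortComplex.Splitting.ofHasBinaryBiproduct J J).shortExact
    (inferInstanceAs (Injective (J ⊞ J))) ‹Injective J›

instance [Q.IsClosedUnderIsomorphisms] :
    (leftInjectivelyResolvable Q).IsClosedUnderIsomorphisms where
  of_iso e hX := inf_injectivelyCovered_le_leftInjectivelyResolvable _
    ⟨Q.prop_of_iso e (leftInjectivelyResolvable_le _ hX),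
      ObjectProperty.prop_of_iso _ e (leftInjectivelyResolvable_le_injectivelyCovered _ hX)⟩

end InjectivelyCovered

section GorensteinInjective

variable {C : Type u} [Category.{v} C] [Abelian C] [HasExt.{w} C]

/-- The objects `Y` with `Ext J Y i = 0` for all `J` in `P` and all `i ≥ 1`: the
right-hand class of the `Ext`-orthogonality in the definition of Gorenstein injectivity. -/
def extRightOrthogonal (P : ObjectProperty C) : ObjectProperty C :=
  fun Y ↦ ∀ J, P J → ∀ i : ℕ, Subsingleton (Ext.{w} J Y (i + 1))

variable {P : ObjectProperty C}

lemma extRightOrthogonal_X₃_of_shortExact {S : ShortComplex C} (hS : S.ShortExact)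
    (h₁ : extRightOrthogonal P S.X₁) (h₂ : extRightOrthogonal P S.X₂) :
    extRightOrthogonal P S.X₃ := fun J hJ i ↦ by
  have := h₁ J hJ (i + 1)
  have := h₂ J hJ i
  refine subsingleton_of_forall_eq 0 fun x ↦ ?_
  obtain ⟨y, rfl⟩ := Ext.covariant_sequence_exact₃ J hS x rfl (Subsingleton.elim _ _)
  rw [Subsingleton.elim y 0, Ext.zero_comp]

lemma isInjective_le_extRightOrthogonal : isInjective C ≤ extRightOrthogonal P :=
  fun I (_ : Injective I) J _ i ↦ Ext.subsingleton_of_injective J I i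

instance : (extRightOrthogonal P).IsClosedUnderExtensions where
  prop_X₂_of_shortExact hS h₁ h₃ J hJ i := by
    have := h₁ J hJ i
    have := h₃ J hJ i
    refine subsingleton_of_forall_eq 0 fun x ↦ ?_
    obtain ⟨y, rfl⟩ := Ext.covariant_sequence_exact₂ J hS x (Subsingleton.elim _ _)
    rw [Subsingleton.elim y 0, Ext.zero_comp]

instance : (extRightOrthogonal P).IsClosedUnderIsomorphisms where
  of_iso {X Y} e hX J hJ i := by
    have := hX J hJ i
    refine subsingleton_of_forall_eq 0 fun x ↦ ?_
    have hx : (x.comp (Ext.mk₀ e.inv) (add_zero _)).comp (Ext.mk₀ e.hom) (add_zero _) = x := by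
      simp
    rw [← hx, Subsingleton.elim (x.comp (Ext.mk₀ e.inv) (add_zero _)) 0, Ext.zero_comp]

variable (C) in
/-- The Gorenstein injective objects of `C`, in the form convenient for homological arguments: `Ext`
from injective objects vanishes on all syzygies of a left resolution by injective objects.
For modules this agrees with `IsGorensteinInjective`, see `isGorensteinInjective_iff`. -/
abbrev gorensteinInjective : ObjectProperty C :=
  leftInjectivelyResolvable (extRightOrthogonal (isInjective C))

lemma gorensteinInjective_X₃_of_shortExact {S : ShortComplex C} (hS : S.ShortExact)
    (hI : Injective S.X₂) (h₁ : gorensteinInjective C S.X₁) : gorensteinInjective C S.X₃ :=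
  inf_injectivelyCovered_le_leftInjectivelyResolvable _
    ⟨extRightOrthogonal_X₃_of_shortExact hS (leftInjectivelyResolvable_le _ h₁)
      (isInjective_le_extRightOrthogonal _ hI), injectivelyCovered_X₃_of_shortExact hS hI h₁⟩

lemma isInjective_le_gorensteinInjective : isInjective C ≤ gorensteinInjective C :=
  isInjective_le_leftInjectivelyResolvable isInjective_le_extRightOrthogonal

/-- The extensions of an object of `P` by an object of `P`. For `P` the Gorenstein injective
objects, this is the class of syzygies which shows that such an extension is again Gorenstein
injective. -/
def selfExtensions (P : ObjectProperty C) : ObjectProperty C :=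
  fun X ↦ ∃ (A B : C) (f : A ⟶ X) (g : X ⟶ B) (w : f ≫ g = 0),
    (ShortComplex.mk f g w).ShortExact ∧ P A ∧ P B

/- Horseshoe lemma. For covers `IA` of `A` and `IB` of `B`, the pullback `E` of `Q ⟶ B ⟵ IB` is an
extension of `IB` by `A`, which splits because `Ext IB A 1 = 0`; the pullback `W` of
`E ⟶ A ⟵ IA` is then an extension of `IA` by `IB`, and it covers `Q`. -/
lemma selfExtensions_le_injectivelyCovered (h₀ : P ≤ extRightOrthogonal (isInjective C))
    (hP : P ≤ injectivelyCovered P) :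
    selfExtensions P ≤ injectivelyCovered (selfExtensions P) := by
  rintro Q ⟨A, B, f, g, w, hQ, hA, hB⟩
  obtain ⟨A', IA, fA, gA, wA, hSA, hIA, hA'⟩ := hP A hA
  obtain ⟨B', IB, fB, gB, wB, hSB, hIB, hB'⟩ := hP B hB
  have hAE := shortExact_of_isPullback hQ (IsPullback.of_hasPullback g gB)
  have hEQ := shortExact_of_isPullback hSB (IsPullback.of_hasPullback g gB).flip
  obtain ⟨σ⟩ := nonempty_splitting_of_subsingleton_ext hAE (h₀ A hA IB hIB 0)
  have hEA := shortExact_of_splitting_swap σ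
  have hWI := shortExact_of_isPullback hEA (IsPullback.of_hasPullback σ.r gA)
  have hWE := shortExact_of_isPullback hSA (IsPullback.of_hasPullback σ.r gA).flip
  have hW : Injective (pullback σ.r gA) := by
    have := hWI.hasInjectiveDimensionLT_X₂ 1 inferInstance inferInstance
    infer_instance
  have := hWE.epi_g
  have hK := IsPullback.of_hasPullback (pullback.fst σ.r gA)
    ((IsPullback.of_hasPullback g gB).flip.lift fB 0 (by simp [wB]))
  have hKW := shortExact_comp_of_isPullback hEQ hK
  have hAB := shortExact_of_isPullback hWE hK
  exact injectivelyCovered_X₃_of_shortExact hKW hW ⟨_, _, _, _, _, hAB, hA', hB'⟩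

instance : (gorensteinInjective C).IsClosedUnderExtensions where
  prop_X₂_of_shortExact {S} hS h₁ h₃ := by
    refine le_leftInjectivelyResolvable ?_
      (selfExtensions_le_injectivelyCovered leftInjectivelyResolvable_le
        leftInjectivelyResolvable_le_injectivelyCovered) _ ⟨_, _, _, _, S.zero, hS, h₁, h₃⟩
    rintro Q ⟨A, B, f, g, w, hQ, hA, hB⟩
    exact ObjectProperty.prop_X₂_of_shortExact _ hQ (leftInjectivelyResolvable_le _ hA)
      (leftInjectivelyResolvable_le _ hB)

end GorensteinInjective

section Dimension

variable (C : Type u) [Category.{v} C] [Abelian C] [HasExt.{w} C]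

/-- The objects of Gorenstein injective dimension at most `n`: those with a coresolution
`0 ⟶ X ⟶ G₀ ⟶ ⋯ ⟶ Gₙ ⟶ 0` by Gorenstein injective objects, defined by recursion on the cosyzygy. -/
def gidLE : ℕ → ObjectProperty C
  | 0 => gorensteinInjective C
  | n + 1 => fun X ↦ ∃ (G X' : C) (f : X ⟶ G) (g : G ⟶ X') (w : f ≫ g = 0),
      (ShortComplex.mk f g w).ShortExact ∧ gorensteinInjective C G ∧ gidLE n X'

variable {C}

lemma gidLE_succ_X₁_of_shortExact {S : ShortComplex C} (hS : S.ShortExact) {n : ℕ}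
    (h₂ : gorensteinInjective C S.X₂) (h₃ : gidLE C n S.X₃) : gidLE C (n + 1) S.X₁ :=
  ⟨S.X₂, S.X₃, S.f, S.g, S.zero, hS, h₂, h₃⟩

instance (n : ℕ) : (gidLE C n).IsClosedUnderIsomorphisms := by
  cases n with
  | zero => exact inferInstanceAs (gorensteinInjective C).IsClosedUnderIsomorphisms
  | succ n =>
    refine ⟨fun e ⟨G, X', f, g, w, hS, hG, hX'⟩ ↦ ?_⟩
    refine ⟨G, X', e.inv ≫ f, g, by rw [Category.assoc, w, comp_zero],
      ShortComplex.shortExact_of_iso ?_ hS, hG, hX'⟩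
    exact ShortComplex.isoMk e (Iso.refl _) (Iso.refl _)

lemma gidLE_of_hasInjectiveDimensionLT [EnoughInjectives C] (n : ℕ) (K : C)
    [HasInjectiveDimensionLT K (n + 1)] : gidLE C n K := by
  induction n generalizing K with
  | zero =>
    exact isInjective_le_gorensteinInjective K (injective_iff_hasInjectiveDimensionLT_one.2 ‹_›)
  | succ n ih =>
    obtain ⟨I⟩ := EnoughInjectives.presentation K
    have hI := I.shortExact_shortComplex
    have := (hI.hasInjectiveDimensionLT_X₃_iff n I.injective).2 inferInstance
    exact gidLE_succ_X₁_of_shortExact hI (isInjective_le_gorensteinInjective _ I.injective) (ih _)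

lemma gidLE_X₃_of_shortExact [EnoughInjectives C] {S : ShortComplex C} (hS : S.ShortExact) (n : ℕ)
    (h₁ : gorensteinInjective C S.X₁) [HasInjectiveDimensionLT S.X₂ (n + 1)] :
    gidLE C n S.X₃ := by
  cases n with
  | zero => exact gorensteinInjective_X₃_of_shortExact hS inferInstance h₁
  | succ n =>
    obtain ⟨I⟩ := EnoughInjectives.presentation S.X₂
    have hI := I.shortExact_shortComplex
    have := (hI.hasInjectiveDimensionLT_X₃_iff n I.injective).2 inferInstance
    have hE := IsPushout.of_hasPushout I.f S.g
    have hLE := shortExact_comp_of_isPushout hS hE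
    have hXE := shortExact_of_isPushout hI hE
    exact gidLE_succ_X₁_of_shortExact hXE (gorensteinInjective_X₃_of_shortExact hLE I.injective h₁)
      (gidLE_of_hasInjectiveDimensionLT n _)

lemma exists_shortExact_of_gidLE {n : ℕ} {X : C} (hX : gidLE C n X) :
    ∃ (L K : C) (f : L ⟶ K) (g : K ⟶ X) (w : f ≫ g = 0), (ShortComplex.mk f g w).ShortExact ∧
      gorensteinInjective C L ∧ HasInjectiveDimensionLT K (n + 1) := by
  induction n generalizing X with
  | zero =>
    obtain ⟨L, I, f, g, w, hS, hI, hL⟩ := leftInjectivelyResolvable_le_injectivelyCovered X hX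
    exact ⟨L, I, f, g, w, hS, hL, inferInstance⟩
  | succ n ih =>
    obtain ⟨G, X', i, p, _, hG, hGI, hX'⟩ := hX
    obtain ⟨L, K, f, g, _, hK, hL, hKd⟩ := ih hX'
    have hE := IsPullback.of_hasPullback p g
    have hXE := shortExact_of_isPullback hG hE
    have hLE := shortExact_of_isPullback hK hE.flip
    obtain ⟨L', I, j, q, _, hI, hII, hL'⟩ := leftInjectivelyResolvable_le_injectivelyCovered _
      (ObjectProperty.prop_X₂_of_shortExact _ hLE hL hGI)
    have := hI.epi_g
    have hP := IsPullback.of_hasPullback q (hE.lift i 0 (by simp [*]))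
    exact ⟨_, _, _, _, _, shortExact_of_isPullback hI hP, hL',
      (shortExact_comp_of_isPullback hXE hP).hasInjectiveDimensionLT_X₁ (n + 1) hKd inferInstance⟩

end Dimension

section Chain

variable {C : Type u} [Category.{v} C] [Abelian C]

lemma exists_int_chain {α : Type*} {r : α → α → Prop} (hl : ∀ x, ∃ y, r y x)
    (hr : ∀ x, ∃ y, r x y) (x : α) : ∃ z : ℤ → α, z 1 = x ∧ ∀ n, r (z (n + 1)) (z n) := by
  choose pre hpre using hl
  choose post hpost using hr
  let z : ℤ → α
    | Int.ofNat 0 => post x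
    | Int.ofNat (n + 1) => pre^[n] x
    | Int.negSucc n => post^[n + 2] x
  refine ⟨z, rfl, ?_⟩
  rintro ((_ | n) | (_ | n))
  · exact hpost _
  · change r (pre^[n + 1] x) (pre^[n] x)
    exact Function.iterate_succ_apply' pre n x ▸ hpre _
  · exact hpost _
  · change r (post^[n + 2] x) (post^[n + 3] x)
    exact Function.iterate_succ_apply' post (n + 2) x ▸ hpost _

variable [HasExt.{w} C]

lemma subsingleton_ext_one_of_forall_exists_comp_eq {S : ShortComplex C} (hS : S.ShortExact)
    (hI : Injective S.X₂) {J : C} (h : ∀ u : J ⟶ S.X₃, ∃ v : J ⟶ S.X₂, v ≫ S.g = u) :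
    Subsingleton (Ext J S.X₁ 1) := by
  refine subsingleton_of_forall_eq 0 fun e ↦ ?_
  obtain ⟨y, rfl⟩ := Ext.covariant_sequence_exact₁ J hS e
    ((Ext.subsingleton_of_injective J S.X₂ 0).elim _ _) (zero_add 1)
  obtain ⟨u, rfl⟩ := (Ext.mk₀_bijective _ _).2 y
  obtain ⟨v, rfl⟩ := h u
  rw [← Ext.mk₀_comp_mk₀, Ext.comp_assoc_of_second_deg_zero, hS.comp_extClass, Ext.comp_zero]

lemma gorensteinInjective_of_chain {Z I : ℤ → C} {f : ∀ n, Z (n + 1) ⟶ I n} {g : ∀ n, I n ⟶ Z n}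
    (w : ∀ n, f n ≫ g n = 0) (hS : ∀ n, (ShortComplex.mk (f n) (g n) (w n)).ShortExact)
    (hI : ∀ n, Injective (I n))
    (h : ∀ n (J : C), Injective J → ∀ u : J ⟶ Z n, ∃ v : J ⟶ I n, v ≫ g n = u) (n : ℤ) :
    gorensteinInjective C (Z n) := by
  refine le_leftInjectivelyResolvable (P := .ofObj Z) ?_ ?_ _ (ObjectProperty.ofObj_apply Z n)
  · rintro _ ⟨n⟩ J hJ i
    induction i generalizing n with
    | zero =>
      obtain ⟨n, rfl⟩ : ∃ m, n = m + 1 := ⟨n - 1, by lia⟩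
      exact subsingleton_ext_one_of_forall_exists_comp_eq (hS n) (hI n) (h n J hJ)
    | succ i ih =>
      obtain ⟨n, rfl⟩ : ∃ m, n = m + 1 := ⟨n - 1, by lia⟩
      refine subsingleton_of_forall_eq 0 fun e ↦ ?_
      obtain ⟨y, rfl⟩ := Ext.covariant_sequence_exact₁ J (hS n) e
        ((Ext.subsingleton_of_injective J (I n) (i + 1)).elim _ _) rfl
      rw [(ih n).elim y 0, Ext.zero_comp]
  · rintro _ ⟨n⟩
    exact injectivelyCovered_X₃_of_shortExact (hS n) (hI n) (ObjectProperty.ofObj_apply Z (n + 1))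

lemma exists_chain_of_gorensteinInjective [EnoughInjectives C] {X : C}
    (hX : gorensteinInjective C X) :
    ∃ (Z I : ℤ → C) (f : ∀ n, Z (n + 1) ⟶ I n) (g : ∀ n, I n ⟶ Z n) (w : ∀ n, f n ≫ g n = 0),
      (∀ n, (ShortComplex.mk (f n) (g n) (w n)).ShortExact) ∧ (∀ n, Injective (I n)) ∧
      (∀ n, gorensteinInjective C (Z n)) ∧ Z 1 = X := by
  obtain ⟨z, hzX, hz⟩ := exists_int_chain
    (α := {Y : C // gorensteinInjective C Y})
    (r := fun A B ↦ ∃ (I : C) (f : A.1 ⟶ I) (g : I ⟶ B.1) (w : f ≫ g = 0),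
      (ShortComplex.mk f g w).ShortExact ∧ Injective I)
    (fun ⟨Y, hY⟩ ↦ by
      obtain ⟨K, I, f, g, w, hS, hI, hK⟩ := leftInjectivelyResolvable_le_injectivelyCovered Y hY
      exact ⟨⟨K, hK⟩, I, f, g, w, hS, hI⟩)
    (fun ⟨Y, hY⟩ ↦ by
      obtain ⟨I⟩ := EnoughInjectives.presentation Y
      have hS := I.shortExact_shortComplex
      exact ⟨⟨_, gorensteinInjective_X₃_of_shortExact hS I.injective hY⟩, _, _, _, _, hS,
        I.injective⟩) ⟨X, hX⟩
  choose I f g w hS hI using hz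
  exact ⟨fun n ↦ (z n).1, I, f, g, w, hS, hI, fun n ↦ (z n).2, congrArg Subtype.val hzX⟩

end Chain

section Modules

variable {R : Type u} [CommRing R]

section Exact

variable {A B C : Type u} [AddCommGroup A] [AddCommGroup B] [AddCommGroup C] [Module R A]
  [Module R B] [Module R C] {f : A →ₗ[R] B} {g : B →ₗ[R] C}

lemma shortExact_ker_of_exact (h : Function.Exact f g) :
    (ShortComplex.mk (ModuleCat.ofHom f.ker.subtype)
      (ModuleCat.ofHom (f.codRestrict g.ker fun x ↦ h.apply_apply_eq_zero x))
      (ModuleCat.hom_ext (LinearMap.ext fun x ↦ Subtype.ext x.2))).ShortExact := by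
  refine ModuleCat.shortComplex_shortExact _ (LinearMap.exact_iff.2 ?_) f.ker.subtype_injective ?_
  · exact (LinearMap.ker_codRestrict _ _ _).trans (Submodule.range_subtype _).symm
  · rintro ⟨y, hy⟩
    obtain ⟨x, rfl⟩ := (h y).1 hy
    exact ⟨x, rfl⟩

/-- The isomorphism of `A` with the kernel of `g` for an exact sequence `0 → A → B → C`. -/
noncomputable def equivKerOfExact (hf : Function.Injective f) (h : Function.Exact f g) :
    A ≃ₗ[R] g.ker :=
  .ofInjective f hf ≪≫ₗ .ofEq _ _ h.linearMap_ker_eq.symm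

end Exact

lemma gorensteinInjective_of_isGorensteinInjective {G : Type u} [AddCommGroup G] [Module R G]
    (hG : IsGorensteinInjective R G) : gorensteinInjective _ (ModuleCat.of R G) := by
  obtain ⟨I, _, _, d, hI, hd, hJ, ⟨e⟩⟩ := hG
  refine ObjectProperty.prop_of_iso _ e.symm.toModuleIso
    (gorensteinInjective_of_chain (Z := fun n ↦ ModuleCat.of R (d n).ker) _
      (fun n ↦ shortExact_ker_of_exact (hd n))
      (fun n ↦ (Module.injective_iff_injective_object R _).1 (hI _)) (fun n J hJ' u ↦ ?_) (-1))
  obtain ⟨v, hv⟩ := hJ J _ _ ((Module.injective_iff_injective_object R J).2 hJ') n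
    ((d n).ker.subtype.comp u.hom) (LinearMap.ext fun x ↦ (u x).2)
  exact ⟨ModuleCat.ofHom v,
    ModuleCat.hom_ext (LinearMap.ext fun x ↦ Subtype.ext (LinearMap.congr_fun hv x))⟩

lemma isGorensteinInjective_of_gorensteinInjective {X : ModuleCat.{u} R}
    (hX : gorensteinInjective _ X) : IsGorensteinInjective R X := by
  obtain ⟨Z, I, f, g, w, hS, hI, hZ, rfl⟩ := exists_chain_of_gorensteinInjective hX
  have hf (n : ℤ) : Function.Injective (f n).hom := (hS n).moduleCat_injective_f
  have hg (n : ℤ) : Function.Surjective (g n).hom := (hS n).moduleCat_surjective_g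
  have hfg (n : ℤ) : Function.Exact (f n).hom (g n).hom :=
    ShortComplex.ShortExact.moduleCat_exact_iff_function_exact _ |>.1 (hS n).exact
  have hfd (n : ℤ) : Function.Exact (f (n + 1)).hom ((f n).hom ∘ₗ (g (n + 1)).hom) :=
    (hf n).comp_exact_iff_exact.2 (hfg (n + 1))
  refine ⟨fun n ↦ I n, inferInstance, inferInstance, fun n ↦ (f n).hom ∘ₗ (g (n + 1)).hom,
    fun n ↦ (Module.injective_iff_injective_object R _).2 (hI n),
    fun n ↦ (hg (n + 1 + 1)).comp_exact_iff_exact.2 (hfd n), fun J _ _ hJ n u hu ↦ ?_,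
    ⟨equivKerOfExact (hf _) (hfd (-1))⟩⟩
  have := (hS n).mono_f
  have := (hS (n + 1)).mono_f
  have hu' : ModuleCat.ofHom u ≫ g (n + 1) = 0 :=
    (cancel_mono (f n)).1 (by rw [zero_comp]; exact ModuleCat.hom_ext hu)
  obtain ⟨v, hv⟩ := exists_comp_eq_of_subsingleton_ext (hS (n + 1 + 1))
    (leftInjectivelyResolvable_le _ (hZ _) (ModuleCat.of R J)
      ((Module.injective_iff_injective_object R J).1 hJ) 0)
    ((hS (n + 1)).exact.lift (ModuleCat.ofHom u) hu')
  refine ⟨v.hom, congrArg ModuleCat.Hom.hom (a₁ := v ≫ g (n + 1 + 1) ≫ f (n + 1)) ?_⟩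
  rw [reassoc_of% hv]
  exact (hS (n + 1)).exact.lift_f _ hu'

lemma isGorensteinInjective_iff (X : ModuleCat.{u} R) :
    IsGorensteinInjective R X ↔ gorensteinInjective _ X :=
  ⟨gorensteinInjective_of_isGorensteinInjective, isGorensteinInjective_of_gorensteinInjective⟩

lemma gidLE_ker_of_exact {n : ℕ} {G : ℕ → Type u} [∀ j, AddCommGroup (G j)]
    [∀ j, Module R (G j)] {d : ∀ j, G j →ₗ[R] G (j + 1)}
    (hG : ∀ j ≤ n, IsGorensteinInjective R (G j)) (hG₀ : ∀ j, n < j → Subsingleton (G j))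
    (hd : ∀ j, Function.Exact (d j) (d (j + 1))) :
    gidLE (ModuleCat.{u} R) n (ModuleCat.of R (d 0).ker) := by
  induction n generalizing G with
  | zero =>
    have := hG₀ 1 zero_lt_one
    have hd₀ : (d 0).ker = ⊤ := LinearMap.ker_eq_top.2 (LinearMap.ext fun _ ↦ Subsingleton.elim _ _)
    exact ObjectProperty.prop_of_iso _ (LinearEquiv.ofTop _ hd₀).symm.toModuleIso
      ((isGorensteinInjective_iff (ModuleCat.of R (G 0))).1 (hG 0 le_rfl))
  | succ n ih =>
    exact gidLE_succ_X₁_of_shortExact (shortExact_ker_of_exact (hd 0))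
      ((isGorensteinInjective_iff (ModuleCat.of R (G 0))).1 (hG 0 n.succ.zero_le))
      (ih (fun j hj ↦ hG (j + 1) (by lia)) (fun j hj ↦ hG₀ (j + 1) (by lia)) fun j ↦ hd (j + 1))

lemma exists_resolution_of_gidLE {n : ℕ} {X : ModuleCat.{u} R} (hX : gidLE _ n X) :
    ∃ (G : ℕ → ModuleCat.{u} R) (ε : X →ₗ[R] G 0) (d : ∀ j, G j →ₗ[R] G (j + 1)),
      (∀ j ≤ n, IsGorensteinInjective R (G j)) ∧ (∀ j, n < j → Subsingleton (G j)) ∧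
      Function.Injective ε ∧ Function.Exact ε (d 0) ∧ ∀ j, Function.Exact (d j) (d (j + 1)) := by
  induction n generalizing X with
  | zero =>
    let G : ℕ → ModuleCat.{u} R
      | 0 => X
      | _ + 1 => ModuleCat.of R PUnit
    have hG₀ (j : ℕ) : Subsingleton (G (j + 1)) := inferInstanceAs (Subsingleton PUnit)
    refine ⟨G, LinearMap.id, fun _ ↦ 0, fun j hj ↦ ?_, fun j hj ↦ ?_, Function.injective_id,
      fun x ↦ ⟨fun _ ↦ ⟨x, rfl⟩, fun _ ↦ rfl⟩,
      fun j x ↦ ⟨fun _ ↦ ⟨0, Subsingleton.elim (h := hG₀ j) _ _⟩, fun _ ↦ rfl⟩⟩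
    · obtain rfl := Nat.le_zero.1 hj
      exact (isGorensteinInjective_iff X).2 hX
    · obtain ⟨j, rfl⟩ := Nat.exists_eq_succ_of_ne_zero hj.ne'
      exact hG₀ j
  | succ n ih =>
    obtain ⟨H, X', f, g, w, hS, hH, hX'⟩ := hX
    obtain ⟨G', ε', d', hG, hG₀, hε, hεd, hd⟩ := ih hX'
    have hfg : Function.Exact f.hom g.hom :=
      (ShortComplex.ShortExact.moduleCat_exact_iff_function_exact _).1 hS.exact
    refine ⟨fun j ↦ j.casesOn H G', f.hom, fun j ↦ j.casesOn (ε' ∘ₗ g.hom) d', ?_, ?_,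
      hS.moduleCat_injective_f, hε.comp_exact_iff_exact.2 hfg, ?_⟩
    · rintro (_ | j) hj
      · exact (isGorensteinInjective_iff H).2 hH
      · exact hG j (by lia)
    · rintro (_ | j) hj
      · exact absurd hj (by lia)
      · exact hG₀ j (by lia)
    · rintro (_ | j)
      · exact (show Function.Surjective g.hom from hS.moduleCat_surjective_g).comp_exact_iff_exact.2
          hεd
      · exact hd j

lemma gorensteinInjectiveDimension_eq_sInf (M : Type u) [AddCommGroup M] [Module R M] :
    GorensteinInjectiveDimension R M =
      sInf {i : EReal | ∃ n : ℕ, i = n ∧ gidLE (ModuleCat.{u} R) n (ModuleCat.of R M)} := by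
  refine congrArg sInf (Set.ext fun i ↦ exists_congr fun n ↦ and_congr_right fun _ ↦ ⟨?_, ?_⟩)
  · rintro ⟨G, _, _, ε, d, hG, hG₀, hε, hεd, hd⟩
    exact ObjectProperty.prop_of_iso _ (equivKerOfExact hε hεd).symm.toModuleIso
      (gidLE_ker_of_exact hG hG₀ hd)
  · intro h
    obtain ⟨G, ε, d, hG⟩ := exists_resolution_of_gidLE h
    exact ⟨fun j ↦ G j, inferInstance, inferInstance, ε, d, hG⟩

end Modules

section Functor

variable {C : Type*} [Category* C] [Abelian C] {D : Type*} [Category* D] [Abelian D]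

lemma leftInjectivelyResolvable_map (F : C ⥤ D) [F.PreservesZeroMorphisms]
    [PreservesFiniteLimits F] [PreservesFiniteColimits F] [F.PreservesInjectiveObjects] {X : C}
    (hX : leftInjectivelyResolvable ⊤ X) : leftInjectivelyResolvable ⊤ (F.obj X) := by
  refine le_leftInjectivelyResolvable (P := (leftInjectivelyResolvable ⊤).strictMap F) le_top ?_ _
    (ObjectProperty.strictMap_obj _ F hX)
  rintro _ ⟨Y, hY⟩
  obtain ⟨K, I, f, g, w, hS, hI, hK⟩ := leftInjectivelyResolvable_le_injectivelyCovered Y hY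
  exact injectivelyCovered_X₃_of_shortExact (hS.map_of_exact F) (F.injective_obj I)
    (ObjectProperty.strictMap_obj _ F hK)

end Functor

section Torsion

variable {R : Type*} [CommRing R] {A : Submonoid R}

lemma isTorsion'_of_ker_le_range {X Y Z : Type*} [AddCommGroup X] [AddCommGroup Y]
    [AddCommGroup Z] [Module R X] [Module R Y] [Module R Z] {f : X →ₗ[R] Y} {g : Y →ₗ[R] Z}
    (hfg : g.ker ≤ f.range) (hX : Module.IsTorsion' X A) (hZ : Module.IsTorsion' Z A) :
    Module.IsTorsion' Y A := by
  intro y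
  obtain ⟨s, hs⟩ := @hZ (g y)
  obtain ⟨x, hx⟩ := hfg (show g ((s : R) • y) = 0 by rw [map_smul]; exact hs)
  obtain ⟨t, ht⟩ := @hX x
  refine ⟨t * s, ?_⟩
  rw [mul_smul]
  change (t : R) • (s : R) • y = 0
  rw [← hx, ← map_smul]
  exact (congrArg f ht).trans (map_zero f)

lemma isTorsion'_of_subsingleton (X : Type*) [AddCommGroup X] [Module R X] [Subsingleton X] :
    Module.IsTorsion' X A :=
  fun {_} ↦ ⟨1, Subsingleton.elim _ _⟩

variable {C : Type u} [Category.{v} C] [Abelian C] [HasExt.{w} C] [Linear R C]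
  {S : ShortComplex C} (hS : S.ShortExact)

include hS in
lemma isTorsion'_ext_covariant₁ (N : C) (i : ℕ) (h₃ : Module.IsTorsion' (Ext N S.X₃ i) A)
    (h₂ : Module.IsTorsion' (Ext N S.X₂ (i + 1)) A) :
    Module.IsTorsion' (Ext N S.X₁ (i + 1)) A :=
  isTorsion'_of_ker_le_range (f := hS.extClass.postcompOfLinear R N rfl)
    (g := (Ext.mk₀ S.f).postcompOfLinear R N (add_zero _))
    (fun x hx ↦ Ext.covariant_sequence_exact₁ N hS x hx rfl) h₃ h₂

include hS in
lemma isTorsion'_ext_covariant₂ (N : C) (i : ℕ) (h₁ : Module.IsTorsion' (Ext N S.X₁ i) A)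
    (h₃ : Module.IsTorsion' (Ext N S.X₃ i) A) : Module.IsTorsion' (Ext N S.X₂ i) A :=
  isTorsion'_of_ker_le_range (f := (Ext.mk₀ S.f).postcompOfLinear R N (add_zero i))
    (g := (Ext.mk₀ S.g).postcompOfLinear R N (add_zero i))
    (fun x hx ↦ Ext.covariant_sequence_exact₂ N hS x hx) h₁ h₃

include hS in
lemma isTorsion'_ext_covariant₃ (N : C) (i : ℕ) (h₂ : Module.IsTorsion' (Ext N S.X₂ i) A)
    (h₁ : Module.IsTorsion' (Ext N S.X₁ (i + 1)) A) : Module.IsTorsion' (Ext N S.X₃ i) A :=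
  isTorsion'_of_ker_le_range (f := (Ext.mk₀ S.g).postcompOfLinear R N (add_zero i))
    (g := hS.extClass.postcompOfLinear R N rfl)
    (fun x hx ↦ Ext.covariant_sequence_exact₃ N hS x rfl hx) h₂ h₁

include hS in
lemma isTorsion'_ext_contravariant₁ (Y : C) (i : ℕ) (h₂ : Module.IsTorsion' (Ext S.X₂ Y i) A)
    (h₃ : Module.IsTorsion' (Ext S.X₃ Y (1 + i)) A) : Module.IsTorsion' (Ext S.X₁ Y i) A :=
  isTorsion'_of_ker_le_range (f := (Ext.mk₀ S.f).precompOfLinear R Y (zero_add i))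
    (g := hS.extClass.precompOfLinear R Y rfl)
    (fun x hx ↦ Ext.contravariant_sequence_exact₁ hS Y x rfl hx) h₂ h₃

include hS in
lemma isTorsion'_ext_contravariant₃ (Y : C) (i : ℕ) (h₁ : Module.IsTorsion' (Ext S.X₁ Y i) A)
    (h₂ : Module.IsTorsion' (Ext S.X₂ Y (1 + i)) A) :
    Module.IsTorsion' (Ext S.X₃ Y (1 + i)) A :=
  isTorsion'_of_ker_le_range (f := hS.extClass.precompOfLinear R Y rfl)
    (g := (Ext.mk₀ S.g).precompOfLinear R Y (zero_add _))
    (fun x hx ↦ Ext.contravariant_sequence_exact₃ hS Y x hx rfl) h₁ h₂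

lemma smul_ext_eq_zero {N : C} {s : R} (hs : s • 𝟙 N = 0) {Y : C} {i : ℕ} (e : Ext N Y i) :
    s • e = 0 := by
  have he : s • (Ext.mk₀ (𝟙 N)).comp e (zero_add i) = 0 := by
    rw [← Ext.smul_comp, ← Ext.mk₀_smul, hs, Ext.mk₀_zero, Ext.zero_comp]
  rwa [Ext.mk₀_id_comp] at he

/-- For large `i` the `R`-module `Ext N Y i` is `A`-torsion, with a bound on `i` uniform in `Y`.
These are the test objects against which modules with a left resolution by injective modules have
`A`-torsion `Ext`. -/
def EventuallyTorsionExt (A : Submonoid R) (N : C) : Prop :=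
  ∃ t : ℕ, ∀ (Y : C) (i : ℕ), t < i → Module.IsTorsion' (Ext N Y i) A

lemma eventuallyTorsionExt_of_projective (N : C) [Projective N] : EventuallyTorsionExt A N := by
  refine ⟨0, fun Y i hi ↦ ?_⟩
  obtain ⟨j, rfl⟩ := Nat.exists_eq_succ_of_ne_zero hi.ne'
  have := Ext.subsingleton_of_projective N Y j
  exact isTorsion'_of_subsingleton _

lemma EventuallyTorsionExt.of_exact {T : ShortComplex C} (hT : T.Exact) [Epi T.g]
    (h₁ : EventuallyTorsionExt A T.X₁) (h₂ : EventuallyTorsionExt A T.X₂) {s : R} (hs : s ∈ A)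
    (hsT : ∀ {Z : C} (k : Z ⟶ T.X₁), k ≫ T.f = 0 → s • k = 0) : EventuallyTorsionExt A T.X₃ := by
  obtain ⟨t, ht⟩ := h₁
  obtain ⟨t', ht'⟩ := h₂
  let φ := kernel.lift T.g T.f T.zero
  have hφ : Epi φ := hT.epi_kernelLift
  have hI : (ShortComplex.mk (kernel.ι φ) φ (kernel.condition φ)).ShortExact :=
    { exact := ShortComplex.exact_kernel φ }
  have hJ : (ShortComplex.mk (kernel.ι T.g) T.g (kernel.condition T.g)).ShortExact :=
    { exact := ShortComplex.exact_kernel T.g }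
  have hker : s • 𝟙 (kernel φ) = 0 := by
    rw [← cancel_mono (kernel.ι φ), Linear.smul_comp, Category.id_comp, zero_comp]
    refine hsT _ ?_
    rw [← kernel.lift_ι T.g T.f T.zero, kernel.condition_assoc, zero_comp]
  refine ⟨t + t' + 2, fun Y i hi ↦ ?_⟩
  obtain ⟨j, rfl⟩ : ∃ j, i = 1 + (1 + j) := ⟨i - 2, by lia⟩
  refine isTorsion'_ext_contravariant₃ hJ Y _ ?_ (ht' Y _ (by lia))
  exact isTorsion'_ext_contravariant₃ hI Y j (fun {e} ↦ ⟨⟨s, hs⟩, smul_ext_eq_zero hker e⟩)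
    (ht Y _ (by lia))

lemma EventuallyTorsionExt.isTorsion'_ext_of_leftInjectivelyResolvable {N : C}
    (hN : EventuallyTorsionExt A N) {X : C} (hX : leftInjectivelyResolvable ⊤ X) (i : ℕ) :
    Module.IsTorsion' (Ext N X (i + 1)) A := by
  obtain ⟨t, ht⟩ := hN
  suffices ∀ k j X, leftInjectivelyResolvable ⊤ X → t ≤ j + k →
      Module.IsTorsion' (Ext N X (j + 1)) A from this t i X hX (by lia)
  intro k
  induction k with
  | zero => exact fun j X _ hj ↦ ht X _ (by lia)
  | succ k ih =>
    intro j X hX hj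
    obtain ⟨K, I, f, g, w, hS, hI, hK⟩ := leftInjectivelyResolvable_le_injectivelyCovered X hX
    have := Ext.subsingleton_of_injective N I j
    exact isTorsion'_ext_covariant₃ hS N _ (isTorsion'_of_subsingleton _)
      (ih (j + 1) K hK (by lia))

variable {D : Type*} [Category* D] [Abelian D] [HasExt D]

lemma EventuallyTorsionExt.isTorsion'_ext_obj_of_gidLE {N : C} (hN : EventuallyTorsionExt A N)
    (F : D ⥤ C) [F.PreservesZeroMorphisms] [PreservesFiniteLimits F] [PreservesFiniteColimits F]
    [F.PreservesInjectiveObjects] {n : ℕ} {X : D} (hX : gidLE D n X) {i : ℕ} (hi : n < i) :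
    Module.IsTorsion' (Ext N (F.obj X) i) A := by
  obtain ⟨i, rfl⟩ := Nat.exists_eq_succ_of_ne_zero hi.ne_bot
  have hG {G : D} (hG : gorensteinInjective D G) (i : ℕ) :
      Module.IsTorsion' (Ext N (F.obj G) (i + 1)) A :=
    hN.isTorsion'_ext_of_leftInjectivelyResolvable
      (leftInjectivelyResolvable_map F (leftInjectivelyResolvable_mono le_top G hG)) i
  induction n generalizing X i with
  | zero => exact hG hX i
  | succ n ih =>
    obtain ⟨G, X', f, g, w, hS, hGI, hX'⟩ := hX
    obtain ⟨i, rfl⟩ := Nat.exists_eq_succ_of_ne_zero (show i ≠ 0 by lia)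
    exact isTorsion'_ext_covariant₁ (hS.map_of_exact F) N _ (ih hX' i (by lia)) (hG hGI _)

end Torsion

section QuotSMulTop

variable {R : Type u} [CommRing R]

lemma EventuallyTorsionExt.quotSMulTop {A : Submonoid R} {N : ModuleCat.{u} R}
    (hN : EventuallyTorsionExt A N) {x s : R} (hs : s ∈ A) (hxs : ∀ m : N, x • m = 0 → s • m = 0) :
    EventuallyTorsionExt A (ModuleCat.of R (QuotSMulTop x N)) :=
  hN.of_exact (N.smulShortComplex_exact x) hN hs fun k hk ↦ by
    ext z
    exact hxs _ (congrArg (fun f ↦ f.hom z) hk)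

end QuotSMulTop

section Noetherian

variable {R : Type u} [CommRing R] [IsNoetherianRing R] (p : Ideal R)

section Zerodivisors

variable {M : Type*} [AddCommGroup M] [Module R M] [Module.Finite R M]

variable {p} in
lemma exists_mem_forall_associatedPrimes_notMem (hp : p ∉ associatedPrimes R M) :
    ∃ x ∈ p, ∀ P ∈ associatedPrimes R M, P ≤ p → x ∉ P := by
  by_contra! h
  have hsub : (p : Set R) ⊆ ⋃ P ∈ {P ∈ associatedPrimes R M | P ≤ p}, (P : Set R) := fun x hx ↦ by
    obtain ⟨P, hP, hPp, hxP⟩ := h x hx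
    exact Set.mem_biUnion (show P ∈ {P ∈ associatedPrimes R M | P ≤ p} from ⟨hP, hPp⟩) hxP
  obtain ⟨P, ⟨hP, hPp⟩, hpP⟩ := (p.subset_union_prime_finite
    ((associatedPrimes.finite R M).subset fun _ ↦ And.left) (f := id) ⊥ ⊥
    fun _ hP _ _ ↦ hP.1.isPrime).1 hsub
  exact hp (hpP.antisymm hPp ▸ hP)

variable [p.IsPrime]

lemma exists_notMem_forall_smul_eq_zero {x : R}
    (hx : ∀ P ∈ associatedPrimes R M, P ≤ p → x ∉ P) :
    ∃ s ∉ p, ∀ m : M, x • m = 0 → s • m = 0 := by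
  let A := LinearMap.ker (LinearMap.lsmul R M x)
  obtain ⟨s, hsA, hsp⟩ : ∃ s ∈ Module.annihilator R A, s ∉ p := by
    by_contra! h
    obtain ⟨P, hP, hPp⟩ := Ideal.exists_minimalPrimes_le (J := p) h
    have hPA := Module.associatedPrimes.minimalPrimes_annihilator_subset_associatedPrimes R A hP
    refine hx P (associatedPrimes.subset_of_injective A.injective_subtype hPA) hPp
      (hP.1.2 (Module.mem_annihilator.2 fun a ↦ Subtype.ext a.2))
  exact ⟨s, hsp, fun m hm ↦ congrArg Subtype.val (Module.mem_annihilator.1 hsA ⟨m, hm⟩)⟩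

end Zerodivisors

/- A finite module `N` of this kind with `Nₚ ≠ 0` and maximal annihilator has `p` as an associated
prime: otherwise some `x ∈ p` acts on `N` with kernel killed outside `p`, and `N ⧸ xN` contradicts
maximality. -/
lemma exists_eventuallyTorsionExt_mem_associatedPrimes [p.IsPrime] :
    ∃ N : ModuleCat.{u} R, EventuallyTorsionExt p.primeCompl N ∧ p ∈ associatedPrimes R N := by
  let candidates : Set (Ideal R) := {I | ∃ N : ModuleCat.{u} R, Module.Finite R N ∧
    EventuallyTorsionExt p.primeCompl N ∧ Module.annihilator R N = I ∧ I ≤ p}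
  have hR : ⊥ ∈ candidates := ⟨ModuleCat.of R R, Module.Finite.self R,
    eventuallyTorsionExt_of_projective _, Module.annihilator_eq_bot.2 inferInstance, bot_le⟩
  obtain ⟨I, ⟨N, hfin, hN, rfl, hp⟩, hmax⟩ :=
    set_has_maximal_iff_noetherian.2 ‹IsNoetherianRing R› candidates ⟨_, hR⟩
  refine ⟨N, hN, by_contra fun hass ↦ ?_⟩
  obtain ⟨x, hxp, hx⟩ := exists_mem_forall_associatedPrimes_notMem hass
  obtain ⟨s, hsp, hs⟩ := exists_notMem_forall_smul_eq_zero p hx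
  have hxN : x ∉ Module.annihilator R N := fun h ↦ hsp <| hp <|
    Module.mem_annihilator.2 fun m ↦ hs m (Module.mem_annihilator.1 h m)
  have hpx : ⟨p, ‹p.IsPrime›⟩ ∈ Module.support R (QuotSMulTop x N) :=
    (Module.support_quotSMulTop x).ge ⟨Module.mem_support_iff_of_finite.2 hp, by simpa using hxp⟩
  refine hmax _ ⟨.of R (QuotSMulTop x N), inferInstanceAs (Module.Finite R (QuotSMulTop x N)),
    hN.quotSMulTop hsp hs, rfl, Module.mem_support_iff_of_finite.1 hpx⟩ (lt_of_le_of_ne ?_ ?_)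
  · exact LinearMap.annihilator_le_of_surjective _ (Submodule.mkQ_surjective _)
  · exact fun h ↦ hxN (h ▸ QuotSMulTop.mem_annihilator N x)

end Noetherian

section ExtQuotient

variable {R : Type u} [CommRing R] {K : ModuleCat.{u} R}

lemma injective_of_subsingleton_ext_quotient
    (h : ∀ J : Ideal R, Subsingleton (Ext (ModuleCat.of R (R ⧸ J)) K 1)) : Injective K := by
  suffices Module.Baer R K from Module.injective_object_of_injective_module (inj := this.injective)
  intro J g
  have hS : (ModuleCat.shortComplexOfCompEqZero J.subtype J.mkQ
      (LinearMap.exact_subtype_mkQ J).linearMap_comp_eq_zero).ShortExact :=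
    ModuleCat.shortComplex_shortExact _ (LinearMap.exact_subtype_mkQ J) J.injective_subtype
      J.mkQ_surjective
  obtain ⟨y, hy⟩ := Ext.contravariant_sequence_exact₁ hS K
    (Ext.mk₀ (ModuleCat.ofHom g : ModuleCat.of R J ⟶ K)) (add_zero 1) (Subsingleton.elim _ _)
  obtain ⟨y, rfl⟩ := Ext.homEquiv₀.symm.surjective y
  rw [Ext.homEquiv₀_symm_apply, Ext.mk₀_comp_mk₀] at hy
  have hyg : _ ≫ y = ModuleCat.ofHom g := Ext.homEquiv₀.symm.injective hy
  exact ⟨y.hom, fun x hx ↦ congrArg (fun f : ModuleCat.of R J ⟶ K ↦ f.hom ⟨x, hx⟩) hyg⟩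

lemma hasInjectiveDimensionLT_of_subsingleton_ext_quotient {d : ℕ}
    (h : ∀ J : Ideal R, Subsingleton (Ext (ModuleCat.of R (R ⧸ J)) K (d + 1))) :
    HasInjectiveDimensionLT K (d + 1) := by
  induction d generalizing K with
  | zero =>
    exact injective_iff_hasInjectiveDimensionLT_one.1
      (injective_of_subsingleton_ext_quotient h)
  | succ d ih =>
    obtain ⟨I⟩ := EnoughInjectives.presentation K
    have hI := I.shortExact_shortComplex
    refine (hI.hasInjectiveDimensionLT_X₃_iff d I.injective).1
      (ih fun J ↦ subsingleton_of_forall_eq 0 fun e ↦ ?_)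
    obtain ⟨y, rfl⟩ := Ext.covariant_sequence_exact₃ _ hI e rfl ((h J).elim _ _)
    rw [Ext.eq_zero_of_injective y, Ext.zero_comp]

lemma subsingleton_ext_of_forall_prime [IsNoetherianRing R] {d : ℕ} (N : ModuleCat.{u} R)
    [Module.Finite R N] (h : ∀ p : PrimeSpectrum R, Module.annihilator R N ≤ p.asIdeal →
      Subsingleton (Ext (ModuleCat.of R (R ⧸ p.asIdeal)) K d)) : Subsingleton (Ext N K d) := by
  suffices ∀ (M : Type u) [AddCommGroup M] [Module R M] [Module.Finite R M],
      Module.annihilator R N ≤ Module.annihilator R M →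
        Subsingleton (Ext (ModuleCat.of R M) K d) from this N le_rfl
  intro M _ _ hM
  induction hM using IsNoetherianRing.induction_on_isQuotientEquivQuotientPrime R with
  | subsingleton M =>
    exact fun _ ↦ subsingleton_of_forall_eq 0 fun e ↦ by
      rw [← Ext.mk₀_id_comp e, (ModuleCat.isZero_of_subsingleton (.of R M)).eq_zero_of_src (𝟙 _),
        Ext.mk₀_zero, Ext.zero_comp]
  | quotient M q e =>
    intro hq
    rw [e.annihilator_eq, Ideal.annihilator_quotient] at hq
    have := h q hq
    refine subsingleton_of_forall_eq 0 fun x ↦ ?_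
    obtain ⟨i⟩ : Nonempty (ModuleCat.of R M ≅ ModuleCat.of R (R ⧸ q.asIdeal)) := ⟨e.toModuleIso⟩
    have hx : (Ext.mk₀ i.hom).comp ((Ext.mk₀ i.inv).comp x (zero_add d)) (zero_add d) = x := by simp
    rw [← hx, Subsingleton.elim ((Ext.mk₀ i.inv).comp x (zero_add d)) 0, Ext.comp_zero]
  | exact M₁ M₂ M₃ f g hf hg hfg h₁ h₃ =>
    intro h₂
    have := h₁ (h₂.trans (f.annihilator_le_of_injective hf))
    have := h₃ (h₂.trans (g.annihilator_le_of_surjective hg))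
    refine subsingleton_of_forall_eq 0 fun x ↦ ?_
    have hS : (ModuleCat.shortComplexOfCompEqZero f g hfg.linearMap_comp_eq_zero).ShortExact :=
      ModuleCat.shortComplex_shortExact _ hfg hf hg
    obtain ⟨y, rfl⟩ := Ext.contravariant_sequence_exact₂ hS K x (Subsingleton.elim _ _)
    rw [Subsingleton.elim y 0, Ext.comp_zero]

end ExtQuotient

section InjectiveDimension

variable {R : Type u} [CommRing R] [IsNoetherianRing R] {K : ModuleCat.{u} R}

lemma ext_quotient_eq_zero_of_smul_eq_zero {p : Ideal R} [p.IsPrime] {d : ℕ}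
    (h : ∀ q : PrimeSpectrum R, p < q.asIdeal →
      Subsingleton (Ext (ModuleCat.of R (R ⧸ q.asIdeal)) K d))
    {s : R} (hs : s ∉ p) {e : Ext (ModuleCat.of R (R ⧸ p)) K d} (he : s • e = 0) : e = 0 := by
  have hquot : Subsingleton (Ext ((ModuleCat.of R (R ⧸ p)).smulShortComplex s).X₃ K d) := by
    refine subsingleton_ext_of_forall_prime (.of R (QuotSMulTop s (R ⧸ p)))
      fun q hq ↦ h q (lt_of_le_of_ne ?_ ?_)
    · exact p.annihilator_quotient.ge.trans
        ((LinearMap.annihilator_le_of_surjective _ (Submodule.mkQ_surjective _)).trans hq)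
    · exact fun hpq ↦ hs (hpq ▸ hq (QuotSMulTop.mem_annihilator _ s))
  have he' : (Ext.mk₀ (s • 𝟙 (ModuleCat.of R (R ⧸ p)))).comp e (zero_add d) = 0 := by
    rwa [Ext.mk₀_smul, Ext.smul_comp, Ext.mk₀_id_comp]
  have hreg : IsSMulRegular (R ⧸ p) s := (isSMulRegular_algebraMap_iff (R ⧸ p)).1 <|
    (IsRegular.of_ne_zero (mt Ideal.Quotient.eq_zero_iff_mem.1 hs)).left.isSMulRegular
  obtain ⟨y, rfl⟩ := Ext.contravariant_sequence_exact₂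
    (IsSMulRegular.smulShortComplex_shortExact (M := ModuleCat.of R (R ⧸ p)) hreg) K e he'
  rw [hquot.elim y 0]
  apply Ext.comp_zero

lemma hasInjectiveDimensionLT_of_isTorsion' {d : ℕ} (h : ∀ p : PrimeSpectrum R,
      Module.IsTorsion' (Ext (ModuleCat.of R (R ⧸ p.asIdeal)) K (d + 1)) p.asIdeal.primeCompl) :
    HasInjectiveDimensionLT K (d + 1) := by
  have hprime (p : PrimeSpectrum R) :
      Subsingleton (Ext (ModuleCat.of R (R ⧸ p.asIdeal)) K (d + 1)) := by
    induction hp : p.asIdeal using WellFoundedGT.induction generalizing p with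
    | ind _ ih =>
      subst hp
      refine subsingleton_of_forall_eq 0 fun e ↦ ?_
      obtain ⟨s, hs⟩ := @h p e
      exact ext_quotient_eq_zero_of_smul_eq_zero (fun q hq ↦ ih q.asIdeal hq q rfl) s.2 hs
  exact hasInjectiveDimensionLT_of_subsingleton_ext_quotient fun J ↦
    subsingleton_ext_of_forall_prime _ fun p _ ↦ hprime p

lemma isTorsion'_ext_quotient_of_eventuallyTorsionExt {p : Ideal R} [p.IsPrime] {d : ℕ}
    [HasInjectiveDimensionLT K (d + 1)]
    (h : ∀ N : ModuleCat.{u} R, EventuallyTorsionExt p.primeCompl N →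
      Module.IsTorsion' (Ext N K d) p.primeCompl) :
    Module.IsTorsion' (Ext (ModuleCat.of R (R ⧸ p)) K d) p.primeCompl := by
  obtain ⟨N, hN, hp⟩ := exists_eventuallyTorsionExt_mem_associatedPrimes p
  obtain ⟨-, f, hf⟩ := (isAssociatedPrime_iff_exists_injective_linearMap p N).1 hp
  have hS : (ModuleCat.shortComplexOfCompEqZero f f.range.mkQ
      f.exact_map_mkQ_range.linearMap_comp_eq_zero).ShortExact :=
    ModuleCat.shortComplex_shortExact _ f.exact_map_mkQ_range hf (Submodule.mkQ_surjective _)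
  have := HasInjectiveDimensionLT.subsingleton K (d + 1) (1 + d) (by lia)
    (ModuleCat.of R (N ⧸ f.range))
  exact isTorsion'_ext_contravariant₁ hS K d (h N hN) (isTorsion'_of_subsingleton _)

lemma hasInjectiveDimensionLT_of_eventuallyTorsionExt (n d : ℕ)
    (hd : HasInjectiveDimensionLT K (d + 1))
    (h : ∀ (p : Ideal R) [p.IsPrime] (N : ModuleCat.{u} R), EventuallyTorsionExt p.primeCompl N →
      ∀ i, n < i → Module.IsTorsion' (Ext N K i) p.primeCompl) :
    HasInjectiveDimensionLT K (n + 1) := by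
  induction d with
  | zero => exact hasInjectiveDimensionLT_of_ge K 1 (n + 1) (by lia)
  | succ d ih =>
    rcases le_or_gt (d + 1) n with hdn | hnd
    · exact hasInjectiveDimensionLT_of_ge K (d + 2) (n + 1) (by lia)
    · refine ih (hasInjectiveDimensionLT_of_isTorsion' fun p ↦ ?_)
      exact isTorsion'_ext_quotient_of_eventuallyTorsionExt fun N hN ↦ h _ N hN (d + 1) hnd

variable {C : Type*} [Category* C] [Abelian C] [HasExt C]

lemma gidLE_obj_of_gidLE (F : C ⥤ ModuleCat.{u} R) [F.PreservesZeroMorphisms]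
    [PreservesFiniteLimits F] [PreservesFiniteColimits F] [F.PreservesInjectiveObjects]
    {d n : ℕ} {X : C} (hd : gidLE (ModuleCat.{u} R) d (F.obj X)) (hn : gidLE C n X) :
    gidLE (ModuleCat.{u} R) n (F.obj X) := by
  obtain ⟨L, K, f, g, w, hS, hL, hK⟩ := exists_shortExact_of_gidLE hd
  have hKn : HasInjectiveDimensionLT K (n + 1) :=
    hasInjectiveDimensionLT_of_eventuallyTorsionExt n d hK fun p _ N hN i hi ↦ by
      refine isTorsion'_ext_covariant₂ hS N i ?_ (hN.isTorsion'_ext_obj_of_gidLE F hn hi)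
      obtain ⟨i, rfl⟩ := Nat.exists_eq_succ_of_ne_zero hi.ne_bot
      exact hN.isTorsion'_ext_of_leftInjectivelyResolvable
        (leftInjectivelyResolvable_mono le_top L hL) i
  exact gidLE_X₃_of_shortExact hS n hL

end InjectiveDimension

section BaseChange

variable {R : Type u} [CommRing R] (T : Type u) [CommRing T] [Algebra R T]

/-- The functor `T ⊗[R] -`. Unlike in `ModuleCat.extendScalars (algebraMap R T)`, the action of
`R` on `T` is the one of the given algebra structure. -/
noncomputable def baseChange : ModuleCat.{u} R ⥤ ModuleCat.{u} T where
  obj X := ModuleCat.of T (TensorProduct R T X)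
  map f := ModuleCat.ofHom (f.hom.baseChange T)
  map_id _ := ModuleCat.hom_ext (LinearMap.baseChange_id ..)
  map_comp _ _ := ModuleCat.hom_ext (LinearMap.baseChange_comp ..)

instance : (baseChange (R := R) T).Additive where
  map_add := ModuleCat.hom_ext (LinearMap.baseChange_add ..)

lemma shortExact_map_baseChange [Module.Flat R T] (S : ShortComplex (ModuleCat.{u} R))
    (hS : S.ShortExact) :
    (S.map (baseChange T)).ShortExact := by
  have hfg := (ShortComplex.ShortExact.moduleCat_exact_iff_function_exact _).1 hS.exact
  exact ModuleCat.shortComplex_shortExact _ (Module.Flat.lTensor_exact T hfg)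
    (Module.Flat.lTensor_preserves_injective_linearMap _ hS.moduleCat_injective_f)
    (LinearMap.lTensor_surjective T hS.moduleCat_surjective_g)

instance [Module.Flat R T] : PreservesFiniteLimits (baseChange (R := R) T) := by
  have := ((Functor.exact_tfae (baseChange (R := R) T)).out 0 3).1 (shortExact_map_baseChange T)
  exact this.1

instance [Module.Flat R T] : PreservesFiniteColimits (baseChange (R := R) T) := by
  have := ((Functor.exact_tfae (baseChange (R := R) T)).out 0 3).1 (shortExact_map_baseChange T)
  exact this.2

lemma preservesInjectiveObjects_baseChange [IsNoetherianRing R] (S : Submonoid R)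
    [IsLocalization S T] : (baseChange (R := R) T).PreservesInjectiveObjects where
  injective_obj {X} hX := by
    have := (Module.injective_iff_injective_object R X).2 hX
    exact (Module.injective_iff_injective_object T _).1
      (Module.injective_of_isLocalizedModule S (TensorProduct.mk R T X 1))

end BaseChange

section Localization

variable {R : Type u} [CommRing R]

lemma gorensteinInjectiveDimension_le_of_isBaseChange [IsNoetherianRing R]
    {T : Type u} [CommRing T] [Algebra R T] (S : Submonoid R) [IsLocalization S T]
    {M N : Type u} [AddCommGroup M] [Module R M] [AddCommGroup N] [Module R N] [Module T N]
    [IsScalarTower R T N] {f : M →ₗ[R] N} (hf : IsBaseChange T f)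
    (hfin : GorensteinInjectiveDimension T N ≠ ⊤) :
    GorensteinInjectiveDimension T N ≤ GorensteinInjectiveDimension R M := by
  have := IsLocalization.isNoetherianRing S T inferInstance
  have := IsLocalization.flat T S
  have := preservesInjectiveObjects_baseChange T S
  rw [gorensteinInjectiveDimension_eq_sInf] at hfin
  obtain ⟨d, hd⟩ : ∃ d : ℕ, gidLE (ModuleCat.{u} T) d (ModuleCat.of T N) := by
    by_contra! h
    exact hfin (sInf_eq_top.2 fun _ ⟨n, _, hn⟩ ↦ absurd hn (h n))
  let e : (baseChange T).obj (ModuleCat.of R M) ≅ ModuleCat.of T N := hf.equiv.toModuleIso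
  rw [gorensteinInjectiveDimension_eq_sInf, gorensteinInjectiveDimension_eq_sInf]
  exact le_sInf fun _ ⟨n, hi, hn⟩ ↦ sInf_le ⟨n, hi, ObjectProperty.prop_of_iso _ e <|
    gidLE_obj_of_gidLE _ (ObjectProperty.prop_of_iso _ e.symm hd) hn⟩

end Localization

end GorensteinInjective

theorem gorensteinInjectiveDimension_localization_le_general {R : Type u} [CommRing R]
    {A B : Submonoid R} (hAB : A ≤ B) [IsNoetherianRing (Localization A)]
    (M : Type u) [AddCommGroup M] [Module R M]
    (hfin : GorensteinInjectiveDimension (Localization B) (LocalizedModule B M) ≠ ⊤) :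
    GorensteinInjectiveDimension (Localization B) (LocalizedModule B M) ≤
      GorensteinInjectiveDimension (Localization A) (LocalizedModule A M) := by
  let : Algebra (Localization A) (Localization B) :=
    IsLocalization.localizationAlgebraOfSubmonoidLe _ _ A B hAB
  have := IsLocalization.localization_isScalarTower_of_submonoid_le
    (Localization A) (Localization B) A B hAB
  have := IsLocalization.isLocalization_of_submonoid_le (Localization A) (Localization B) A B hAB
  let : Module (Localization A) (LocalizedModule B M) :=
    .restrictScalars (Localization A) (Localization B) _
  have : IsScalarTower (Localization A) (Localization B) (LocalizedModule B M) :=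
    .restrictScalars (Localization A) (Localization B) _
  have : IsScalarTower R (Localization A) (LocalizedModule B M) :=
    .to₁₂₄ R (Localization A) (Localization B) (LocalizedModule B M)
  let g := (LocalizedModule.liftOfLE A B hAB (M := M)).extendScalarsOfIsLocalization A
    (Localization A)
  have hg : g.restrictScalars R ∘ₗ LocalizedModule.mkLinearMap A M =
      LocalizedModule.mkLinearMap B M := IsLocalizedModule.liftOfLE_comp A B hAB _ _
  have hB : IsBaseChange (Localization B)
      (g.restrictScalars R ∘ₗ LocalizedModule.mkLinearMap A M) :=
    hg ▸ LocalizedModule.isBaseChange B M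
  exact GorensteinInjective.gorensteinInjectiveDimension_le_of_isBaseChange
    (B.map (algebraMap R (Localization A))) (.of_comp (LocalizedModule.isBaseChange A M) hB) hfin

/-- Let `R` be a commutative noetherian ring, `M` an `R`-module, and `p ⊆ q` prime ideals of
`R`.  If the Gorenstein injective dimension `Gid_{R_p}(M_p)` is finite, then
`Gid_{R_p}(M_p) ≤ Gid_{R_q}(M_q)`. -/
theorem gorensteinInjectiveDimension_localization_le
    (R : Type u) [CommRing R] [IsNoetherianRing R]
    (M : Type u) [AddCommGroup M] [Module R M]
    (p q : Ideal R) [p.IsPrime] [q.IsPrime] (hpq : p ≤ q)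
    (hfin : GorensteinInjectiveDimension (Localization.AtPrime p)
      (LocalizedModule p.primeCompl M) ≠ ⊤) :
    GorensteinInjectiveDimension (Localization.AtPrime p)
        (LocalizedModule p.primeCompl M) ≤
      GorensteinInjectiveDimension (Localization.AtPrime q)
        (LocalizedModule q.primeCompl M) := by
  have := IsLocalization.isNoetherianRing q.primeCompl (Localization q.primeCompl) inferInstance
  exact gorensteinInjectiveDimension_localization_le_general (Set.compl_subset_compl.2 hpq) M hfin
end

section
/- Let R be a commutative noetherian ring and M a Gorenstein injective R-module. Then for every prime ideal p of R, depth R_p ≤ width_{R_p} M_p. -/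
open CategoryTheory

universe u

/-- The depth of a module `N` over a commutative noetherian local ring `S`,
`inf { i | Ext^i_S(k, N) ≠ 0 }`, as an element of the extended (integer) line,
with `inf ∅ = ⊤`. -/
noncomputable def moduleDepth (S : Type u) [CommRing S] [IsLocalRing S]
    (N : Type u) [AddCommGroup N] [Module S N] : EReal :=
  sInf {i : EReal | ∃ n : ℕ, i = (n : EReal) ∧
    Nontrivial (((Ext S (ModuleCat S) n).obj
      (Opposite.op (ModuleCat.of S (IsLocalRing.ResidueField S)))).obj (ModuleCat.of S N))}

/-- The width of a module `N` over a commutative noetherian local ring `S`,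
`inf { i | Tor_i^S(k, N) ≠ 0 }`, as an element of the extended (integer) line,
with `inf ∅ = ⊤`. -/
noncomputable def moduleWidth (S : Type u) [CommRing S] [IsLocalRing S]
    (N : Type u) [AddCommGroup N] [Module S N] : EReal :=
  sInf {i : EReal | ∃ n : ℕ, i = (n : EReal) ∧
    Nontrivial (((Tor (ModuleCat S) n).obj
      (ModuleCat.of S (IsLocalRing.ResidueField S))).obj (ModuleCat.of S N))}

/-!
Suppose that `S = R_p` has depth greater than `n`, and choose an `S`-regular sequence of length
`n + 1` in the maximal ideal. For an injective `S`-module `E` the functor `Hom(-, E)` is exact,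
so it turns `0 → N → N → N/rN → 0` into `0 → Hom(N/rN, E) → Hom(N, E) → Hom(N, E) → 0`; induction
along the regular sequence, starting from `E = Hom(S, E)`, gives `Ext^i(E, V) = 0` for `i ≤ n`
and every `V` killed by the maximal ideal. A Gorenstein injective module has left
resolutions by injectives of any length, and these localize because `R` is noetherian. Dimension
shifting along the resolution of `M_p` carries the vanishing of `Ext^i(-, V)` over from injective
modules to `M_p`. Taking for `V` the character module of the residue field `k`,
the group `Ext^n(M_p, V)` is the character module of `Tor_n(k, M_p)`, which therefore vanishes.
-/

universe v w

section ExtVanishing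

variable {C : Type u} [Category.{v} C] [Abelian C] [HasExt.{w} C]

/-- The vanishing of `Ext^i(X, Y)` in all degrees `i < n`, the form in which bounds on depth and
width are propagated along short exact sequences. -/
def ExtVanishesBelow (n : ℕ) (X Y : C) : Prop :=
  ∀ i < n, Subsingleton (Abelian.Ext X Y i)

lemma ExtVanishesBelow.mono {m n : ℕ} {X Y : C} (h : ExtVanishesBelow n X Y) (hmn : m ≤ n) :
    ExtVanishesBelow m X Y :=
  fun i hi ↦ h i (hi.trans_le hmn)

lemma ExtVanishesBelow.of_iso {n : ℕ} {X X' Y : C} (e : X ≅ X') (h : ExtVanishesBelow n X Y) :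
    ExtVanishesBelow n X' Y := by
  refine fun i hi ↦ subsingleton_of_forall_eq 0 fun x ↦ ?_
  have := h i hi
  rw [← Abelian.Ext.mk₀_id_comp x, ← e.inv_hom_id, ← Abelian.Ext.mk₀_comp_mk₀_assoc,
    Subsingleton.elim ((Abelian.Ext.mk₀ e.hom).comp x (zero_add i)) 0, Abelian.Ext.comp_zero]

lemma ExtVanishesBelow.succ_of_shortExact {n : ℕ} {T : ShortComplex C} {Y : C}
    (hT : T.ShortExact)
    (hg : ∀ i < n + 1, ∀ x : Abelian.Ext T.X₃ Y i,
      (Abelian.Ext.mk₀ T.g).comp x (zero_add i) = 0)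
    (h₁ : ExtVanishesBelow n T.X₁ Y) : ExtVanishesBelow (n + 1) T.X₃ Y := by
  refine fun i hi ↦ subsingleton_of_forall_eq 0 fun x ↦ ?_
  cases i with
  | zero =>
    have := hT.epi_g
    exact Abelian.Ext.precomp_mk₀_injective_of_epi Y T.g (by simpa using hg 0 hi x)
  | succ j =>
    obtain ⟨y, rfl⟩ := Abelian.Ext.contravariant_sequence_exact₃ hT Y x (hg _ hi x) (add_comm 1 j)
    have := h₁ j (by lia)
    rw [Subsingleton.elim y 0, Abelian.Ext.comp_zero]

end ExtVanishing

section RegularSequence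

variable {S : Type u} [CommRing S]

lemma smul_id_comp_ext_eq_zero_of_mem_annihilator {X Y : ModuleCat.{v} S}
    [HasExt.{w} (ModuleCat.{v} S)] {r : S} (hr : r ∈ Module.annihilator S Y) {f : X ⟶ X}
    (hf : f = r • 𝟙 X) {i : ℕ} (x : Abelian.Ext X Y i) :
    (Abelian.Ext.mk₀ f).comp x (zero_add i) = 0 := by
  have hrY : r • 𝟙 Y = 0 := by
    ext y
    exact Module.mem_annihilator.1 hr y
  rw [hf, Abelian.Ext.mk₀_smul, Abelian.Ext.smul_comp, Abelian.Ext.mk₀_id_comp,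
    Abelian.Ext.smul_eq_comp_mk₀, hrY, Abelian.Ext.mk₀_zero, Abelian.Ext.comp_zero]

lemma shortExact_lcomp_of_injective {A B C E : Type u} [AddCommGroup A] [Module S A]
    [AddCommGroup B] [Module S B] [AddCommGroup C] [Module S C] [AddCommGroup E] [Module S E]
    [Module.Injective S E] {f : A →ₗ[S] B} {g : B →ₗ[S] C} (hf : Function.Injective f)
    (hfg : Function.Exact f g) (hg : Function.Surjective g) :
    (ModuleCat.shortComplexOfCompEqZero (g.lcomp S E) (f.lcomp S E)
      (LinearMap.exact_lcomp_of_exact_of_surjective E hfg hg).linearMap_comp_eq_zero).ShortExact :=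
  ModuleCat.shortComplex_shortExact _ (LinearMap.exact_lcomp_of_exact_of_surjective E hfg hg)
    (LinearMap.lcomp_injective_of_surjective g hg) fun φ ↦ by
      obtain ⟨ψ, hψ⟩ := Module.Injective.out f hf φ
      exact ⟨ψ, LinearMap.ext hψ⟩

open RingTheory.Sequence in
lemma extVanishesBelow_linearMap_of_isWeaklyRegular {N E V : Type u} [AddCommGroup N] [Module S N]
    [AddCommGroup E] [Module S E] [Module.Injective S E] [AddCommGroup V] [Module S V]
    {rs : List S} (hN : IsWeaklyRegular N rs) (hV : ∀ r ∈ rs, r ∈ Module.annihilator S V) :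
    ExtVanishesBelow rs.length (ModuleCat.of S (N →ₗ[S] E)) (ModuleCat.of S V) := by
  induction rs generalizing N with
  | nil => exact fun i hi ↦ absurd hi (Nat.not_lt_zero i)
  | cons r rs ih =>
    obtain ⟨hr, hrs⟩ := (isWeaklyRegular_cons_iff N r rs).1 hN
    have hT := shortExact_lcomp_of_injective (E := E) (f := LinearMap.lsmul S N r) hr
      (LinearMap.exact_lsmul_mkQ_smul_top N r) (Submodule.mkQ_surjective _)
    have hg : ModuleCat.ofHom ((LinearMap.lsmul S N r).lcomp S E) = r • 𝟙 _ := by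
      ext φ x
      exact φ.map_smul r x
    exact .succ_of_shortExact hT
      (fun _ _ ↦ smul_id_comp_ext_eq_zero_of_mem_annihilator (hV r List.mem_cons_self) hg)
      (ih hrs fun s hs ↦ hV s (List.mem_cons_of_mem r hs))

lemma extVanishesBelow_of_isWeaklyRegular_self {E V : Type u} [AddCommGroup E] [Module S E]
    [Module.Injective S E] [AddCommGroup V] [Module S V] {rs : List S}
    (hS : RingTheory.Sequence.IsWeaklyRegular S rs) (hV : ∀ r ∈ rs, r ∈ Module.annihilator S V) :
    ExtVanishesBelow rs.length (ModuleCat.of S E) (ModuleCat.of S V) :=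
  (extVanishesBelow_linearMap_of_isWeaklyRegular hS hV).of_iso
    (LinearMap.ringLmapEquivSelf S S E).toModuleIso

end RegularSequence

section Comparison

variable {C : Type u} [Category.{v} C] [Abelian C]

-- In degree `0`, here and below, `(ComplexShape.down ℕ).next 0 = 0` and `d 0 0 = 0`, so the last
-- condition says `f = 0`.
lemma linearYonedaObj_exactAt_iff {S : Type w} [Ring S] [Linear S C] (K : ChainComplex C ℕ) (Y : C)
    (n : ℕ) :
    (K.linearYonedaObj S Y).ExactAt n ↔ ∀ f : K.X n ⟶ Y, K.d (n + 1) n ≫ f = 0 →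
      ∃ g : K.X ((ComplexShape.down ℕ).next n) ⟶ Y, K.d n _ ≫ g = f := by
  rw [HomologicalComplex.exactAt_iff' _ _ n (n + 1) rfl (by simp),
    ShortComplex.moduleCat_exact_iff]
  rfl

lemma subsingleton_ext_iff_of_projectiveResolution [HasExt.{w} C] {X Y : C}
    (P : ProjectiveResolution X) {n : ℕ} :
    Subsingleton (Abelian.Ext X Y n) ↔ ∀ f : P.complex.X n ⟶ Y, P.complex.d (n + 1) n ≫ f = 0 →
      ∃ g : P.complex.X ((ComplexShape.down ℕ).next n) ⟶ Y, P.complex.d n _ ≫ g = f := by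
  cases n with
  | zero =>
    have h : P.complex.d 0 ((ComplexShape.down ℕ).next 0) = 0 := P.complex.shape _ _ (by simp)
    simp only [h, Limits.zero_comp, exists_const, eq_comm (a := (0 : P.complex.X 0 ⟶ Y))]
    constructor
    · intro hXY f hf
      have : Subsingleton (X ⟶ Y) := Abelian.Ext.addEquiv₀.symm.subsingleton
      have hdesc : P.exact₀.desc f hf = 0 := this.elim _ _
      rw [← P.exact₀.g_desc f hf, hdesc, Limits.comp_zero]
    · refine fun hP ↦ subsingleton_of_forall_eq 0 fun x ↦ ?_
      obtain ⟨f, hf, rfl⟩ := P.extMk_surjective x 1 rfl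
      obtain rfl := hP f hf
      exact P.extMk_zero _ _
  | succ n =>
    rw [ChainComplex.next_nat_succ, subsingleton_iff_forall_eq 0]
    constructor
    · exact fun h f hf ↦ (P.extMk_eq_zero_iff f _ rfl hf n rfl).1 (h _)
    · intro h x
      obtain ⟨f, hf, rfl⟩ := P.extMk_surjective x (n + 2) rfl
      exact (P.extMk_eq_zero_iff f _ rfl hf n rfl).2 (h f hf)

lemma subsingleton_abelianExt_iff_subsingleton_ext {S : Type u} [CommRing S]
    {X Y : ModuleCat.{u} S} {n : ℕ} :
    Subsingleton (Abelian.Ext X Y n) ↔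
      Subsingleton (((Ext S (ModuleCat.{u} S) n).obj (Opposite.op X)).obj Y) := by
  let P := ProjectiveResolution.of X
  rw [subsingleton_ext_iff_of_projectiveResolution P, ← linearYonedaObj_exactAt_iff (S := S),
    HomologicalComplex.exactAt_iff_isZero_homology, ← (P.isoExt (R := S) n Y).isZero_iff,
    ModuleCat.isZero_iff_subsingleton]

end Comparison

section Duality

variable {S : Type*} [CommRing S]

lemma annihilator_le_annihilator_characterModule (X : Type*) [AddCommGroup X] [Module S X] :
    Module.annihilator S X ≤ Module.annihilator S (CharacterModule X) := by
  refine fun r hr ↦ Module.mem_annihilator.2 fun c ↦ CharacterModule.ext _ fun x ↦ ?_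
  rw [CharacterModule.smul_apply, Module.mem_annihilator.1 hr x, map_zero]
  rfl

variable {A B C : Type*} [AddCommGroup A] [Module S A] [AddCommGroup B] [Module S B]
  [AddCommGroup C] [Module S C] {f : A →ₗ[S] B} {g : B →ₗ[S] C}

lemma exact_of_exact_dual
    (h : Function.Exact (CharacterModule.dual g) (CharacterModule.dual f)) :
    Function.Exact f g := by
  refine fun b ↦ ⟨fun hb ↦ ?_, ?_⟩
  · by_contra hbf
    have hb0 : (LinearMap.range f).mkQ b ≠ 0 := by simpa using hbf
    obtain ⟨c, hc⟩ := CharacterModule.exists_character_apply_ne_zero_of_ne_zero hb0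
    have hcf : CharacterModule.dual f (CharacterModule.dual (LinearMap.range f).mkQ c) = 0 := by
      rw [← LinearMap.comp_apply, ← CharacterModule.dual_comp, LinearMap.range_mkQ_comp,
        CharacterModule.dual_zero, LinearMap.zero_apply]
    obtain ⟨c', hc'⟩ := (h _).1 hcf
    have hcb := DFunLike.congr_fun hc' b
    exact hc (hcb.symm.trans ((congrArg c' hb).trans (map_zero c')))
  · rintro ⟨a, rfl⟩
    refine CharacterModule.eq_zero_of_character_apply fun c ↦ ?_
    exact DFunLike.congr_fun (h.apply_apply_eq_zero c) a

lemma lTensor_exact_of_exact_lcomp_characterModule {X : Type*} [AddCommGroup X] [Module S X]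
    (h : Function.Exact (g.lcomp S (CharacterModule X)) (f.lcomp S (CharacterModule X))) :
    Function.Exact (f.lTensor X) (g.lTensor X) := by
  have hdual : Function.Exact (CharacterModule.dual (g.rTensor X))
      (CharacterModule.dual (f.rTensor X)) := by
    refine Function.Exact.of_ladder_linearEquiv_of_exact (e₁ := CharacterModule.homEquiv)
      (e₂ := CharacterModule.homEquiv) (e₃ := CharacterModule.homEquiv) ?_ ?_ h <;>
    · rw [← CharacterModule.dual_rTensor_conj_homEquiv]
      ext
      simp
  exact Function.Exact.of_ladder_linearEquiv_of_exact (e₁ := TensorProduct.comm S A X)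
    (e₂ := TensorProduct.comm S B X) (e₃ := TensorProduct.comm S C X)
    (by ext; rfl) (by ext; rfl) (exact_of_exact_dual hdual)

end Duality

lemma subsingleton_tor_of_subsingleton_ext_characterModule {S X Y : Type u} [CommRing S]
    [AddCommGroup X] [Module S X] [AddCommGroup Y] [Module S Y] {n : ℕ}
    (h : Subsingleton (Abelian.Ext (ModuleCat.of S Y)
      (ModuleCat.of S (CharacterModule X)) n)) :
    Subsingleton (((Tor (ModuleCat S) n).obj (ModuleCat.of S X)).obj (ModuleCat.of S Y)) := by
  let P := ProjectiveResolution.of (ModuleCat.of S Y)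
  have hP : Function.Exact
      ((P.complex.d n ((ComplexShape.down ℕ).next n)).hom.lcomp S (CharacterModule X))
      ((P.complex.d (n + 1) n).hom.lcomp S (CharacterModule X)) := by
    refine fun φ ↦ ⟨fun hφ ↦ ?_, ?_⟩
    · obtain ⟨ψ, hψ⟩ := (subsingleton_ext_iff_of_projectiveResolution P).1 h (ModuleCat.ofHom φ)
        (ModuleCat.hom_ext hφ)
      exact ⟨ψ.hom, congrArg ModuleCat.Hom.hom hψ⟩
    · rintro ⟨ψ, rfl⟩
      have hd := congrArg ModuleCat.Hom.hom (P.complex.d_comp_d (n + 1) n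
        ((ComplexShape.down ℕ).next n))
      rw [LinearMap.lcomp_apply', LinearMap.lcomp_apply', LinearMap.comp_assoc,
        ← ModuleCat.hom_comp, hd]
      exact LinearMap.comp_zero ψ
  let F := (MonoidalCategory.tensoringLeft (ModuleCat.{u} S)).obj (ModuleCat.of S X)
  have hF : ((F.mapHomologicalComplex _).obj P.complex).ExactAt n := by
    rw [HomologicalComplex.exactAt_iff' _ (n + 1) n _ (by simp) rfl,
      ShortComplex.ShortExact.moduleCat_exact_iff_function_exact]
    exact lTensor_exact_of_exact_lcomp_characterModule hP
  rw [HomologicalComplex.exactAt_iff_isZero_homology] at hF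
  exact ModuleCat.subsingleton_of_isZero (hF.of_iso (P.isoLeftDerivedObj F n))

section Resolution

/-- `HasInjectiveLeftResolution R n M` asserts the existence of an exact sequence
`E_{n-1} → ⋯ → E_0 → M → 0` with all `E_i` injective, along which the vanishing of `Ext` is shifted
from injective modules to `M`. It is encoded by splicing `n` short exact sequences. -/
inductive HasInjectiveLeftResolution (R : Type u) [CommRing R] :
    ℕ → ∀ (M : Type u) [AddCommGroup M] [Module R M], Prop
  | zero (M : Type u) [AddCommGroup M] [Module R M] : HasInjectiveLeftResolution R 0 M
  | succ {n : ℕ} {K E M : Type u} [AddCommGroup K] [Module R K] [AddCommGroup E] [Module R E]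
      [AddCommGroup M] [Module R M] [Module.Injective R E] {f : K →ₗ[R] E} {g : E →ₗ[R] M}
      (hf : Function.Injective f) (hfg : Function.Exact f g) (hg : Function.Surjective g)
      (hK : HasInjectiveLeftResolution R n K) : HasInjectiveLeftResolution R (n + 1) M

namespace HasInjectiveLeftResolution

variable {R : Type u} [CommRing R] {n : ℕ} {M : Type u} [AddCommGroup M] [Module R M]

lemma of_linearEquiv {M' : Type u} [AddCommGroup M'] [Module R M'] (e : M ≃ₗ[R] M')
    (h : HasInjectiveLeftResolution R n M) : HasInjectiveLeftResolution R n M' := by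
  cases h with
  | zero => exact .zero M'
  | @succ n K E _ _ _ _ _ _ _ _ f g hf hfg hg hK =>
    exact .succ (g := e.toLinearMap ∘ₗ g) hf (hfg.comp_injective _ e.injective e.map_zero)
      (e.surjective.comp hg) hK

lemma localizedModule [IsNoetherianRing R] (W : Submonoid R)
    (h : HasInjectiveLeftResolution R n M) :
    HasInjectiveLeftResolution (Localization W) n (LocalizedModule W M) := by
  induction h with
  | zero M => exact .zero _
  | @succ _ _ E _ _ _ _ _ _ _ _ f g hf hfg hg _ ih =>
    have : Module.Injective (Localization W) (LocalizedModule W E) :=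
      Module.injective_of_isLocalizedModule W (LocalizedModule.mkLinearMap W E)
    exact .succ (g := LocalizedModule.map W g) (LocalizedModule.map_injective W f hf)
      (LocalizedModule.map_exact W f g hfg) (LocalizedModule.map_surjective W g hg) ih

lemma extVanishesBelow {V : ModuleCat.{u} R} (h : HasInjectiveLeftResolution R n M)
    (hV : ∀ (E : Type u) [AddCommGroup E] [Module R E] [Module.Injective R E],
      ExtVanishesBelow n (ModuleCat.of R E) V) :
    ExtVanishesBelow n (ModuleCat.of R M) V := by
  induction h with
  | zero M => exact fun i hi ↦ absurd hi (Nat.not_lt_zero i)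
  | @succ n K E M _ _ _ _ _ _ _ f g hf hfg hg _ ih =>
    have hT : (ModuleCat.shortComplexOfCompEqZero f g hfg.linearMap_comp_eq_zero).ShortExact :=
      ModuleCat.shortComplex_shortExact _ hfg hf hg
    exact .succ_of_shortExact hT (fun i hi _ ↦ (hV E i hi).elim _ _)
      (ih fun E _ _ _ ↦ (hV E).mono n.le_succ)

lemma ker_of_exact {I : ℤ → Type u} [∀ m, AddCommGroup (I m)] [∀ m, Module R (I m)]
    [∀ m, Module.Injective R (I m)] {d : ∀ m : ℤ, I (m + 1) →ₗ[R] I m}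
    (hd : ∀ m, Function.Exact (d (m + 1)) (d m)) (n : ℕ) (m : ℤ) :
    HasInjectiveLeftResolution R n (LinearMap.ker (d m)) := by
  induction n generalizing m with
  | zero => exact .zero _
  | succ n ih =>
    let g : I (m + 1 + 1) →ₗ[R] LinearMap.ker (d m) :=
      (d (m + 1)).codRestrict _ (hd m).apply_apply_eq_zero
    have hg : Function.Surjective g := fun ⟨x, hx⟩ ↦
      let ⟨y, hy⟩ := (hd m x).1 hx
      ⟨y, Subtype.ext hy⟩
    have hfg : Function.Exact (LinearMap.ker (d (m + 1))).subtype g := by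
      rw [LinearMap.exact_iff, Submodule.range_subtype]
      exact LinearMap.ker_codRestrict _ _ _
    exact .succ (Submodule.subtype_injective _) hfg hg (ih (m + 1))

end HasInjectiveLeftResolution

lemma IsGorensteinInjective.hasInjectiveLeftResolution {R M : Type u} [CommRing R]
    [AddCommGroup M] [Module R M] (hM : IsGorensteinInjective R M) (n : ℕ) :
    HasInjectiveLeftResolution R n M := by
  obtain ⟨I, _, _, d, hI, hd, -, ⟨e⟩⟩ := hM
  exact (HasInjectiveLeftResolution.ker_of_exact hd n (-1)).of_linearEquiv e.symm

end Resolution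

section DepthWidth

variable {S : Type u} [CommRing S] [IsLocalRing S]

lemma extVanishesBelow_of_lt_moduleDepth {N : Type u} [AddCommGroup N] [Module S N] {n : ℕ}
    (h : (n : EReal) < moduleDepth S N) :
    ExtVanishesBelow (n + 1) (ModuleCat.of S (IsLocalRing.ResidueField S)) (ModuleCat.of S N) := by
  refine fun i hi ↦ subsingleton_abelianExt_iff_subsingleton_ext.2
    (not_nontrivial_iff_subsingleton.1 fun hnt ↦ ?_)
  have hdepth : moduleDepth S N ≤ (i : EReal) := sInf_le ⟨i, rfl, hnt⟩
  have hin : (i : EReal) ≤ n := by exact_mod_cast Nat.lt_succ_iff.1 hi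
  exact (hdepth.trans hin).not_gt h

lemma exists_isWeaklyRegular_of_extVanishesBelow [IsNoetherianRing S] {n : ℕ}
    (h : ExtVanishesBelow n (ModuleCat.of S (IsLocalRing.ResidueField S)) (ModuleCat.of S S)) :
    ∃ rs : List S, rs.length = n ∧ (∀ r ∈ rs, r ∈ IsLocalRing.maximalIdeal S) ∧
      RingTheory.Sequence.IsWeaklyRegular S rs := by
  have hsupp : Module.support S (IsLocalRing.ResidueField S) =
      PrimeSpectrum.zeroLocus (IsLocalRing.maximalIdeal S) := by
    rw [Module.support_eq_zeroLocus]
    exact congrArg _ (congrArg _ Ideal.annihilator_quotient)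
  have hlt : IsLocalRing.maximalIdeal S • (⊤ : Submodule S S) < ⊤ := by
    rw [smul_eq_mul, Ideal.mul_top]
    exact (IsLocalRing.maximalIdeal.isMaximal S).ne_top.lt_top
  obtain ⟨rs, hn, hrs, hreg⟩ := ModuleCat.exists_isRegular_of_exists_subsingleton_ext
    (IsLocalRing.maximalIdeal S) n (ModuleCat.of S S) hlt
    (ModuleCat.of S (IsLocalRing.ResidueField S)) hsupp h
  exact ⟨rs, hn, hrs, hreg.toIsWeaklyRegular⟩

lemma mem_annihilator_characterModule_residueField {r : S}
    (hr : r ∈ IsLocalRing.maximalIdeal S) :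
    r ∈ Module.annihilator S (CharacterModule (IsLocalRing.ResidueField S)) :=
  annihilator_le_annihilator_characterModule _ (Ideal.annihilator_quotient.ge hr)

theorem moduleDepth_le_moduleWidth_of_hasInjectiveLeftResolution [IsNoetherianRing S]
    {M : Type u} [AddCommGroup M] [Module S M] (hM : ∀ n, HasInjectiveLeftResolution S n M) :
    moduleDepth S S ≤ moduleWidth S M := by
  refine le_sInf ?_
  rintro _ ⟨n, rfl, hn⟩
  by_contra! hlt
  obtain ⟨rs, hlen, hrs, hreg⟩ :=
    exists_isWeaklyRegular_of_extVanishesBelow (extVanishesBelow_of_lt_moduleDepth hlt)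
  have hE (E : Type u) [AddCommGroup E] [Module S E] [Module.Injective S E] :
      ExtVanishesBelow (n + 1) (ModuleCat.of S E)
        (ModuleCat.of S (CharacterModule (IsLocalRing.ResidueField S))) :=
    hlen ▸ extVanishesBelow_of_isWeaklyRegular_self hreg
      fun r hr ↦ mem_annihilator_characterModule_residueField (hrs r hr)
  have hTor := subsingleton_tor_of_subsingleton_ext_characterModule
    ((hM (n + 1)).extVanishesBelow hE n n.lt_succ_self)
  exact not_nontrivial_iff_subsingleton.2 hTor hn

end DepthWidth

theorem depth_le_width_of_gorensteinInjective_general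
    (R : Type u) [CommRing R] [IsNoetherianRing R]
    (M : Type u) [AddCommGroup M] [Module R M]
    (hM : ∀ n, HasInjectiveLeftResolution R n M) (p : Ideal R) [p.IsPrime] :
    moduleDepth (Localization.AtPrime p) (Localization.AtPrime p) ≤
      moduleWidth (Localization.AtPrime p) (LocalizedModule p.primeCompl M) := by
  have : IsNoetherianRing (Localization.AtPrime p) :=
    IsLocalization.isNoetherianRing p.primeCompl _ inferInstance
  exact moduleDepth_le_moduleWidth_of_hasInjectiveLeftResolution
    fun n ↦ (hM n).localizedModule p.primeCompl

/-- Let `R` be a commutative noetherian ring and `M` a Gorenstein injective `R`-module.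
Then for every prime ideal `p` of `R`, `depth R_p ≤ width_{R_p} M_p`. -/
theorem depth_le_width_of_gorensteinInjective
    (R : Type u) [CommRing R] [IsNoetherianRing R]
    (M : Type u) [AddCommGroup M] [Module R M]
    (hM : IsGorensteinInjective R M) (p : Ideal R) [p.IsPrime] :
    moduleDepth (Localization.AtPrime p) (Localization.AtPrime p) ≤
      moduleWidth (Localization.AtPrime p) (LocalizedModule p.primeCompl M) :=
  depth_le_width_of_gorensteinInjective_general R M hM.hasInjectiveLeftResolution p
end

section
/- Let R be a commutative noetherian ring and M a nonzero Gorenstein injective R-module. Then sup { depth R_p − width_{R_p} M_p | p ∈ Spec(R) } = 0. -/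
open CategoryTheory

universe u

/-!
Let `⋯ → I₁ → I₀ → M → 0` be exact with all `Iⱼ` injective, and suppose first that the base is a
local ring `S` with residue field `k`, with `F → k` a resolution by finitely generated projectives.
Since `F ⊗ J ≃ Hom(F^*, J)`, vanishing of `Extⁿ(k, S)` forces vanishing of `Torₙ(k, J)` for every
injective `J`, and shifting dimensions along `I` gives `depth S ≤ width M`. Put `n = depth S`. If
the width were larger than `n`, the same shift would lift the whole socle of `I₀` along the map from
the socle of `I₁`: the socle of `J` is `Hom(k, J)`, and homomorphisms into `J` from the nonzero
`k`-vector space `Extⁿ(k, S)` are represented by cycles of `F ⊗ J`.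

Localizations of injective modules over a noetherian ring are injective, so this applies at every
prime. It remains to find a prime at which the socle does not lift. As `M ≠ 0`, the map `I₁ → I₀` is
not surjective, and a map from an injective module which is surjective on the socles of all
localizations is surjective: it restricts to an isomorphism from a maximal submodule meeting its
kernel trivially onto an essential submodule of the target, and this isomorphism splits.
-/

universe v

section Resolution

variable {S : Type*} [CommRing S] {F : ℕ → Type*} [∀ n, AddCommGroup (F n)]
  [∀ n, Module S (F n)] {X : Type*} [AddCommGroup X] [Module S X]

/-- The sequence `⋯ → F 1 → F 0 → X → 0` is exact. The modules `F n` are arbitrary, so that the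
notion covers projective resolutions as well as left resolutions by injective modules. -/
structure IsResolution (d : ∀ n, F (n + 1) →ₗ[S] F n) (ε : F 0 →ₗ[S] X) : Prop where
  surjective : Function.Surjective ε
  exact_zero : Function.Exact (d 0) ε
  exact_succ (n : ℕ) : Function.Exact (d (n + 1)) (d n)

namespace IsResolution

variable {d : ∀ n, F (n + 1) →ₗ[S] F n} {ε : F 0 →ₗ[S] X}

lemma comp_eq_zero (h : IsResolution d ε) (n : ℕ) : d n ∘ₗ d (n + 1) = 0 :=
  (h.exact_succ n).linearMap_comp_eq_zero

lemma syzygy (h : IsResolution d ε) :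
    IsResolution (F := fun n => F (n + 1)) (fun n => d (n + 1))
      ((d 0).codRestrict (LinearMap.ker ε) h.exact_zero.apply_apply_eq_zero) where
  surjective := by
    rintro ⟨x, hx⟩
    obtain ⟨y, rfl⟩ := (h.exact_zero x).1 hx
    exact ⟨y, rfl⟩
  exact_zero x := by
    rw [← h.exact_succ 0 x, Subtype.ext_iff]
    rfl
  exact_succ n := h.exact_succ (n + 1)

lemma localizedModule (h : IsResolution d ε) (T : Submonoid S) :
    IsResolution (F := fun n => LocalizedModule T (F n)) (fun n => LocalizedModule.map T (d n))
      (LocalizedModule.map T ε) where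
  surjective := LocalizedModule.map_surjective T ε h.surjective
  exact_zero := LocalizedModule.map_exact T _ _ h.exact_zero
  exact_succ n := LocalizedModule.map_exact T _ _ (h.exact_succ n)

lemma not_surjective [Nontrivial X] (h : IsResolution d ε) : ¬ Function.Surjective (d 0) := by
  intro hd
  obtain ⟨x, hx⟩ := exists_ne (0 : X)
  obtain ⟨y, rfl⟩ := h.surjective x
  exact hx ((h.exact_zero y).2 (hd y))

end IsResolution

end Resolution

section Tensor

open TensorProduct LinearMap

variable {S : Type*} [CommRing S]

lemma rTensor_lTensor_apply {A B C D : Type*} [AddCommGroup A] [Module S A] [AddCommGroup B]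
    [Module S B] [AddCommGroup C] [Module S C] [AddCommGroup D] [Module S D]
    (f : A →ₗ[S] B) (g : C →ₗ[S] D) (x : A ⊗[S] C) :
    f.rTensor D (g.lTensor A x) = g.lTensor B (f.rTensor C x) := by
  rw [← LinearMap.comp_apply, ← LinearMap.comp_apply, rTensor_comp_lTensor, lTensor_comp_rTensor]

variable {F : ℕ → Type*} [∀ n, AddCommGroup (F n)] [∀ n, Module S (F n)]
  (d : ∀ n, F (n + 1) →ₗ[S] F n)

/-- The cycles of the complex `⋯ → F 1 ⊗ N → F 0 ⊗ N → 0`. -/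
def tensorCycles (N : Type*) [AddCommGroup N] [Module S N] : ∀ n, Submodule S (F n ⊗[S] N)
  | 0 => ⊤
  | n + 1 => ker ((d n).rTensor N)

/-- Vanishing of the homology of the complex `⋯ → F 1 ⊗ N → F 0 ⊗ N → 0` in degree `n`; if `F` is a
flat resolution of `X`, this means `Tor n X N = 0`. -/
def TensorExactAt (N : Type*) [AddCommGroup N] [Module S N] (n : ℕ) : Prop :=
  tensorCycles d N n ≤ range ((d n).rTensor N)

variable {d} {N' Q N X : Type*} [AddCommGroup N'] [Module S N'] [AddCommGroup Q] [Module S Q]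
  [AddCommGroup N] [Module S N] [AddCommGroup X] [Module S X]

lemma lTensor_mem_tensorCycles (f : Q →ₗ[S] N) {n : ℕ} {x : F n ⊗[S] Q}
    (hx : x ∈ tensorCycles d Q n) : f.lTensor (F n) x ∈ tensorCycles d N n := by
  cases n with
  | zero => trivial
  | succ n =>
    have hx : (d n).rTensor Q x = 0 := hx
    change (d n).rTensor N (f.lTensor _ x) = 0
    rw [rTensor_lTensor_apply, hx, map_zero]

lemma lTensor_mem_tensorCycles_iff [∀ n, Module.Flat S (F n)] {f : N' →ₗ[S] Q}
    (hf : Function.Injective f) {n : ℕ} {x : F n ⊗[S] N'} :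
    f.lTensor (F n) x ∈ tensorCycles d Q n ↔ x ∈ tensorCycles d N' n := by
  refine ⟨fun hx => ?_, lTensor_mem_tensorCycles f⟩
  cases n with
  | zero => trivial
  | succ n =>
    refine Module.Flat.lTensor_preserves_injective_linearMap (M := F n) f hf ?_
    rw [← rTensor_lTensor_apply, map_zero]
    exact hx

lemma rTensor_mem_tensorCycles (hd : ∀ n, d n ∘ₗ d (n + 1) = 0) {n : ℕ} (x : F (n + 1) ⊗[S] N) :
    (d n).rTensor N x ∈ tensorCycles d N n := by
  cases n with
  | zero => trivial
  | succ n =>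
    change (d n).rTensor N ((d (n + 1)).rTensor N x) = 0
    rw [← LinearMap.comp_apply, ← rTensor_comp, hd, rTensor_zero, LinearMap.zero_apply]

lemma tensorExactAt_zero_iff_surjective :
    TensorExactAt d N 0 ↔ Function.Surjective ((d 0).lTensor N) := by
  rw [lTensor_surj_iff_rTensor_surj, ← range_eq_top, ← top_le_iff]
  rfl

lemma tensorExactAt_succ_iff_exact (hd : ∀ n, d n ∘ₗ d (n + 1) = 0) {n : ℕ} :
    TensorExactAt d N (n + 1) ↔ Function.Exact ((d (n + 1)).lTensor N) ((d n).lTensor N) := by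
  rw [← rTensor_exact_iff_lTensor_exact, exact_iff, le_antisymm_iff]
  refine ⟨fun h => ⟨h, ?_⟩, fun h => h.1⟩
  rw [range_le_ker_iff, ← rTensor_comp, hd, rTensor_zero]

section LongExactSequence

variable {ι : N' →ₗ[S] Q} {π : Q →ₗ[S] N}

lemma exists_mem_tensorCycles_lTensor_eq (hιπ : Function.Exact ι π)
    (hπ : Function.Surjective π) {n : ℕ}
    (hinj : ∀ x, ι.lTensor (F n) x ∈ range ((d n).rTensor Q) → x ∈ range ((d n).rTensor N'))
    {z : F (n + 1) ⊗[S] N} (hz : z ∈ tensorCycles d N (n + 1)) :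
    ∃ y ∈ tensorCycles d Q (n + 1), π.lTensor (F (n + 1)) y = z := by
  have hexact (i) : Function.Exact (ι.lTensor (F i)) (π.lTensor (F i)) := lTensor_exact _ hιπ hπ
  obtain ⟨y, rfl⟩ := lTensor_surjective (F (n + 1)) hπ z
  obtain ⟨x, hx⟩ := (hexact n ((d n).rTensor Q y)).1 (by rw [← rTensor_lTensor_apply]; exact hz)
  obtain ⟨x', rfl⟩ := hinj x ⟨y, hx.symm⟩
  refine ⟨y - ι.lTensor _ x', ?_, ?_⟩
  · change (d n).rTensor Q (y - ι.lTensor _ x') = 0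
    rw [map_sub, rTensor_lTensor_apply, hx, sub_self]
  · rw [map_sub, (hexact _).apply_apply_eq_zero, sub_zero]

lemma TensorExactAt.exists_sub_mem_range (hιπ : Function.Exact ι π)
    (hπ : Function.Surjective π) {n : ℕ} (hN : TensorExactAt d N n) {y : F n ⊗[S] Q}
    (hy : π.lTensor (F n) y ∈ tensorCycles d N n) :
    ∃ x : F n ⊗[S] N', y - ι.lTensor (F n) x ∈ range ((d n).rTensor Q) := by
  obtain ⟨w, hw⟩ := hN hy
  obtain ⟨w, rfl⟩ := lTensor_surjective (F (n + 1)) hπ w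
  obtain ⟨x, hx⟩ := (lTensor_exact (F n) hιπ hπ (y - (d n).rTensor Q w)).1 (by
    rw [map_sub, ← rTensor_lTensor_apply, hw, sub_self])
  exact ⟨x, w, by rw [hx, sub_sub_cancel]⟩

lemma tensorExactAt_succ_iff_mem_range [∀ n, Module.Flat S (F n)] (hd : ∀ n, d n ∘ₗ d (n + 1) = 0)
    (hι : Function.Injective ι) (hιπ : Function.Exact ι π) (hπ : Function.Surjective π) {n : ℕ}
    (hQ : TensorExactAt d Q (n + 1)) :
    TensorExactAt d N (n + 1) ↔ ∀ x, ι.lTensor (F n) x ∈ range ((d n).rTensor Q) →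
      x ∈ range ((d n).rTensor N') := by
  constructor
  · rintro hN x ⟨y, hy⟩
    have hz : π.lTensor _ y ∈ tensorCycles d N (n + 1) := by
      change (d n).rTensor N (π.lTensor _ y) = 0
      rw [rTensor_lTensor_apply, hy, (lTensor_exact _ hιπ hπ).apply_apply_eq_zero]
    obtain ⟨x', w, hw⟩ := hN.exists_sub_mem_range hιπ hπ hz
    refine ⟨x', Module.Flat.lTensor_preserves_injective_linearMap (M := F n) ι hι ?_⟩
    have hdw : (d n).rTensor Q ((d (n + 1)).rTensor Q w) = 0 := rTensor_mem_tensorCycles hd w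
    rw [← rTensor_lTensor_apply, ← hy, eq_comm, ← sub_eq_zero, ← map_sub, ← hw, hdw]
  · intro hinj z hz
    obtain ⟨y, hy, rfl⟩ := exists_mem_tensorCycles_lTensor_eq hιπ hπ hinj hz
    obtain ⟨w, rfl⟩ := hQ hy
    exact ⟨π.lTensor _ w, rTensor_lTensor_apply _ _ _⟩

lemma tensorExactAt_succ_iff [∀ n, Module.Flat S (F n)] (hd : ∀ n, d n ∘ₗ d (n + 1) = 0)
    (hι : Function.Injective ι) (hιπ : Function.Exact ι π) (hπ : Function.Surjective π) {n : ℕ}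
    (hQ : TensorExactAt d Q n) (hQ' : TensorExactAt d Q (n + 1)) :
    TensorExactAt d N (n + 1) ↔ TensorExactAt d N' n := by
  rw [tensorExactAt_succ_iff_mem_range hd hι hιπ hπ hQ']
  refine forall_congr' fun x => imp_congr_left ?_
  rw [← lTensor_mem_tensorCycles_iff hι]
  refine ⟨?_, fun hx => hQ hx⟩
  rintro ⟨y, hy⟩
  exact hy ▸ rTensor_mem_tensorCycles hd y

lemma exists_mem_tensorCycles_lTensor_eq_of_tensorExactAt [∀ n, Module.Flat S (F n)]
    (hd : ∀ n, d n ∘ₗ d (n + 1) = 0) (hι : Function.Injective ι) (hιπ : Function.Exact ι π)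
    (hπ : Function.Surjective π) {n : ℕ} (hN' : ∀ i < n, TensorExactAt d N' i) {z : F n ⊗[S] N}
    (hz : z ∈ tensorCycles d N n) : ∃ y ∈ tensorCycles d Q n, π.lTensor (F n) y = z := by
  cases n with
  | zero =>
    obtain ⟨y, hy⟩ := lTensor_surjective (F 0) hπ z
    exact ⟨y, trivial, hy⟩
  | succ n =>
    refine exists_mem_tensorCycles_lTensor_eq hιπ hπ (fun x hx => hN' n n.lt_succ_self ?_) hz
    obtain ⟨y, hy⟩ := hx
    exact (lTensor_mem_tensorCycles_iff hι).1 (hy ▸ rTensor_mem_tensorCycles hd y)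

end LongExactSequence

section Balance

namespace IsResolution

variable {ε : F 0 →ₗ[S] X} (hF : IsResolution d ε)
include hF

lemma tensorExactAt_succ_of_flat (N : Type*) [AddCommGroup N] [Module S N] [Module.Flat S N]
    (n : ℕ) : TensorExactAt d N (n + 1) :=
  fun x hx => (Module.Flat.rTensor_exact N (hF.exact_succ n) x).1 hx

lemma tensorExactAt_zero_iff : TensorExactAt d N 0 ↔ Subsingleton (X ⊗[S] N) := by
  change ⊤ ≤ range ((d 0).rTensor N) ↔ _
  rw [← (rTensor_exact N hF.exact_zero hF.surjective).linearMap_ker_eq, top_le_iff, ker_eq_top,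
    ← range_eq_bot, range_eq_top.2 (rTensor_surjective N hF.surjective), eq_comm]
  exact subsingleton_iff_bot_eq_top.trans (Submodule.subsingleton_iff S)

lemma tensorExactAt_one_iff :
    TensorExactAt d N 1 ↔ Function.Injective ((ker ε).subtype.rTensor N) := by
  have hker := hF.syzygy
  set η := (d 0).codRestrict (ker ε) hF.exact_zero.apply_apply_eq_zero
  rw [injective_iff_map_eq_zero, (rTensor_surjective N hker.surjective).forall]
  refine forall_congr' fun x => imp_congr ?_ ?_
  · rw [← LinearMap.comp_apply, ← rTensor_comp]
    rfl
  · exact (rTensor_exact N hker.exact_zero hker.surjective x).symm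

variable [∀ n, Module.Flat S (F n)] {N : Type v} [AddCommGroup N] [Module S N]
  {Q : ℕ → Type v} [∀ n, AddCommGroup (Q n)] [∀ n, Module S (Q n)] [∀ n, Module.Flat S (Q n)]
  {e : ∀ n, Q (n + 1) →ₗ[S] Q n} {η : Q 0 →ₗ[S] N}

lemma tensorExactAt_one_iff_injective_lTensor (hQ : IsResolution e η) :
    TensorExactAt d N 1 ↔ Function.Injective ((ker η).subtype.lTensor X) := by
  rw [tensorExactAt_succ_iff_mem_range hF.comp_eq_zero (ker η).subtype_injective
    (exact_subtype_ker_map η) hQ.surjective (hF.tensorExactAt_succ_of_flat (Q 0) 0),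
    injective_iff_map_eq_zero, (rTensor_surjective (ker η) hF.surjective).forall]
  refine forall_congr' fun x => ?_
  rw [← rTensor_lTensor_apply,
    ← (rTensor_exact (Q 0) hF.exact_zero hF.surjective).linearMap_ker_eq,
    ← (rTensor_exact (ker η) hF.exact_zero hF.surjective).linearMap_ker_eq, mem_ker, mem_ker]

theorem tensorExactAt_comm (hQ : IsResolution e η) (n : ℕ) :
    TensorExactAt d N n ↔ TensorExactAt e X n := by
  induction n generalizing N Q with
  | zero =>
    rw [hF.tensorExactAt_zero_iff, hQ.tensorExactAt_zero_iff]
    exact (TensorProduct.comm S X N).subsingleton_congr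
  | succ n ih =>
    cases n with
    | zero =>
      rw [hF.tensorExactAt_one_iff_injective_lTensor hQ, hQ.tensorExactAt_one_iff,
        lTensor_inj_iff_rTensor_inj]
    | succ n =>
      rw [tensorExactAt_succ_iff hF.comp_eq_zero (ker η).subtype_injective
        (exact_subtype_ker_map η) hQ.surjective (hF.tensorExactAt_succ_of_flat (Q 0) n)
        (hF.tensorExactAt_succ_of_flat (Q 0) (n + 1))]
      exact ih hQ.syzygy

end IsResolution

end Balance

section DimensionShift

namespace IsResolution

variable [∀ n, Module.Flat S (F n)] (hd : ∀ n, d n ∘ₗ d (n + 1) = 0) {X : Type v}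
  [AddCommGroup X] [Module S X] {J : ℕ → Type v} [∀ j, AddCommGroup (J j)] [∀ j, Module S (J j)]
  {δ : ∀ j, J (j + 1) →ₗ[S] J j} {φ : J 0 →ₗ[S] X}
include hd

lemma tensorExactAt (h : IsResolution δ φ) {n : ℕ} (hJ : ∀ j, ∀ i ≤ n, TensorExactAt d (J j) i) :
    TensorExactAt d X n := by
  induction n generalizing X J with
  | zero =>
    intro z _
    obtain ⟨y, rfl⟩ := lTensor_surjective (F 0) h.surjective z
    obtain ⟨w, rfl⟩ := hJ 0 0 le_rfl (x := y) trivial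
    exact ⟨φ.lTensor _ w, rTensor_lTensor_apply _ _ _⟩
  | succ n ih =>
    rw [tensorExactAt_succ_iff hd (ker φ).subtype_injective (exact_subtype_ker_map φ)
      h.surjective (hJ 0 n n.le_succ) (hJ 0 (n + 1) le_rfl)]
    exact ih h.syzygy fun j i hi => hJ (j + 1) i (hi.trans n.le_succ)

lemma exists_mem_tensorCycles_sub_mem_range (h : IsResolution δ φ) {n : ℕ}
    (hJ : ∀ j, ∀ i < n, TensorExactAt d (J j) i) (hX : TensorExactAt d X n) {t : F n ⊗[S] J 0}
    (ht : t ∈ tensorCycles d (J 0) n) :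
    ∃ u ∈ tensorCycles d (J 1) n, t - (δ 0).lTensor (F n) u ∈ range ((d n).rTensor (J 0)) := by
  obtain ⟨a, w, hw⟩ := hX.exists_sub_mem_range (exact_subtype_ker_map φ) h.surjective
    (lTensor_mem_tensorCycles φ ht)
  have ha : a ∈ tensorCycles d (ker φ) n := by
    rw [← lTensor_mem_tensorCycles_iff (ker φ).subtype_injective,
      ← sub_sub_cancel t (lTensor _ _ a), ← hw]
    exact sub_mem ht (rTensor_mem_tensorCycles hd w)
  obtain ⟨u, hu, rfl⟩ := exists_mem_tensorCycles_lTensor_eq_of_tensorExactAt hd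
    (Submodule.subtype_injective _) (exact_subtype_ker_map _) h.syzygy.surjective
    (fun i hi => h.syzygy.syzygy.tensorExactAt hd fun j m hm => hJ (j + 2) m (hm.trans_lt hi)) ha
  refine ⟨u, hu, w, ?_⟩
  rw [hw, ← LinearMap.comp_apply, ← lTensor_comp]
  rfl

end IsResolution

end DimensionShift

end Tensor

section Duality

open TensorProduct LinearMap

variable {S : Type*} [CommRing S]

section

variable {A B N N' : Type*} [AddCommGroup A] [Module S A] [Module.Finite S A]
  [Module.Projective S A] [AddCommGroup B] [Module S B] [Module.Finite S B] [Module.Projective S B]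
  [AddCommGroup N] [Module S N] [AddCommGroup N'] [Module S N']

variable (A N) in
/-- For a finitely generated projective module `A`, contraction of `A ⊗ N` against the dual
of `A`, as an isomorphism `A ⊗ N ≃ Hom(A^*, N)`. -/
noncomputable def contractDual : A ⊗[S] N ≃ₗ[S] (Module.Dual S A →ₗ[S] N) :=
  TensorProduct.congr (Module.evalEquiv S A) (LinearEquiv.refl S N) ≪≫ₗ
    dualTensorHomEquiv S (Module.Dual S A) N

@[simp]
lemma contractDual_tmul_apply (a : A) (y : N) (l : Module.Dual S A) :
    contractDual A N (a ⊗ₜ y) l = l a • y := by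
  simp [contractDual]

lemma contractDual_rTensor (f : A →ₗ[S] B) (t : A ⊗[S] N) :
    contractDual B N (f.rTensor N t) = contractDual A N t ∘ₗ f.dualMap := by
  induction t with
  | zero => simp
  | add x y hx hy => simp only [map_add, hx, hy, add_comp]
  | tmul x y => ext l; simp

lemma contractDual_lTensor (f : N →ₗ[S] N') (t : A ⊗[S] N) :
    contractDual A N' (f.lTensor A t) = f ∘ₗ contractDual A N t := by
  induction t with
  | zero => simp
  | add x y hx hy => simp only [map_add, hx, hy, comp_add]
  | tmul x y => ext l; simp

end

variable {F : ℕ → Type*} [∀ n, AddCommGroup (F n)] [∀ n, Module S (F n)]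
  (d : ∀ n, F (n + 1) →ₗ[S] F n)

/-- The coboundaries of the complex `0 → Hom(F 0, N) → Hom(F 1, N) → ⋯`. -/
def homCoboundaries (N : Type*) [AddCommGroup N] [Module S N] : ∀ n, Submodule S (F n →ₗ[S] N)
  | 0 => ⊥
  | n + 1 => range ((d n).lcomp S N)

/-- Vanishing of the cohomology of the complex `0 → Hom(F 0, N) → Hom(F 1, N) → ⋯` in degree `n`;
if `F` is a projective resolution of `X`, this means `Ext n X N = 0`. -/
def HomExactAt (N : Type*) [AddCommGroup N] [Module S N] (n : ℕ) : Prop :=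
  ker ((d n).lcomp S N) ≤ homCoboundaries d N n

variable {d} [∀ n, Module.Finite S (F n)] [∀ n, Module.Projective S (F n)]

lemma mem_tensorCycles_iff {N : Type*} [AddCommGroup N] [Module S N] {n : ℕ} {t : F n ⊗[S] N} :
    t ∈ tensorCycles d N n ↔ homCoboundaries d S n ≤ ker (contractDual (F n) N t) := by
  cases n with
  | zero => exact iff_of_true trivial bot_le
  | succ n =>
    change (d n).rTensor N t = 0 ↔ range (d n).dualMap ≤ _
    rw [← (contractDual (F n) N).map_eq_zero_iff, contractDual_rTensor, range_le_ker_iff]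

end Duality

section Injective

variable {S : Type u} [CommRing S] {A B J : Type u} [AddCommGroup A] [Module S A] [AddCommGroup B]
  [Module S B] [AddCommGroup J] [Module S J] [Module.Injective S J]

open LinearMap

lemma exists_comp_eq_of_ker_le (f : A →ₗ[S] B) (g : A →ₗ[S] J) (h : ker f ≤ ker g) :
    ∃ l : B →ₗ[S] J, l ∘ₗ f = g := by
  obtain ⟨l, hl⟩ := Module.Injective.out ((ker f).liftQ f le_rfl)
    (ker_eq_bot.1 (Submodule.ker_liftQ_eq_bot _ _ _ le_rfl)) ((ker f).liftQ g h)
  exact ⟨l, LinearMap.ext fun x => hl (Submodule.Quotient.mk x)⟩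

lemma exists_le_ker_apply_eq {W : Submodule S A} {z : A} {c : J}
    (h : ∀ x : S, x • z ∈ W → x • c = 0) : ∃ g : A →ₗ[S] J, W ≤ ker g ∧ g z = c := by
  obtain ⟨l, hl⟩ := exists_comp_eq_of_ker_le (W.mkQ ∘ₗ toSpanSingleton S A z)
    (toSpanSingleton S J c) fun x hx => h x ((Submodule.Quotient.mk_eq_zero W).1 hx)
  refine ⟨l ∘ₗ W.mkQ, fun w hw => ?_, ?_⟩
  · rw [mem_ker, LinearMap.comp_apply, W.mkQ_apply, (Submodule.Quotient.mk_eq_zero W).2 hw,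
      map_zero]
  · simpa using LinearMap.congr_fun hl 1

variable {F : ℕ → Type u} [∀ n, AddCommGroup (F n)] [∀ n, Module S (F n)]
  {d : ∀ n, F (n + 1) →ₗ[S] F n} [∀ n, Module.Finite S (F n)] [∀ n, Module.Projective S (F n)]

lemma HomExactAt.tensorExactAt {n : ℕ} (h : HomExactAt d S n) : TensorExactAt d J n := by
  intro t ht
  obtain ⟨l, hl⟩ := exists_comp_eq_of_ker_le (d n).dualMap (contractDual (F n) J t)
    (h.trans (mem_tensorCycles_iff.1 ht))
  obtain ⟨w, rfl⟩ := (contractDual (F (n + 1)) J).surjective l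
  exact ⟨w, (contractDual (F n) J).injective (by rw [contractDual_rTensor, hl])⟩

section Socle

variable (hd : ∀ n, d n ∘ₗ d (n + 1) = 0) {I : ℕ → Type u} [∀ j, AddCommGroup (I j)]
  [∀ j, Module S (I j)] [∀ j, Module.Injective S (I j)] {δ : ∀ j, I (j + 1) →ₗ[S] I j}
  {X : Type u} [AddCommGroup X] [Module S X] {φ : I 0 →ₗ[S] X} (h : IsResolution δ φ)
include hd h

lemma IsResolution.tensorExactAt_of_homExactAt {n : ℕ} (hS : ∀ i ≤ n, HomExactAt d S i) :
    TensorExactAt d X n :=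
  h.tensorExactAt hd fun _ i hi => (hS i hi).tensorExactAt

-- The class of `z` spans a copy of `S ⧸ m` in the cohomology of `Hom(F, S)`, so some cocycle with
-- values in `I 0` sends `z` to `c`; the dimension shift moves that cocycle into the image of `δ 0`.
lemma IsResolution.exists_smul_eq_zero_and_apply_eq {n : ℕ} (hS : ∀ i < n, HomExactAt d S i)
    (hX : TensorExactAt d X n) {m : Ideal S} [m.IsMaximal] {z : Module.Dual S (F n)}
    (hz : (d n).dualMap z = 0) (hz' : z ∉ homCoboundaries d S n)
    (hm : ∀ x ∈ m, x • z ∈ homCoboundaries d S n) {c : I 0} (hc : ∀ x ∈ m, x • c = 0) :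
    ∃ y : I 1, (∀ x ∈ m, x • y = 0) ∧ δ 0 y = c := by
  obtain ⟨g, hg, rfl⟩ : ∃ g : Module.Dual S (F n) →ₗ[S] I 0,
      homCoboundaries d S n ≤ ker g ∧ g z = c := by
    refine exists_le_ker_apply_eq fun x hx => hc x ?_
    by_contra hxm
    obtain ⟨y, i, hi, hyi⟩ := Ideal.IsMaximal.exists_inv ‹_› hxm
    refine hz' ?_
    rw [← one_smul S z, ← hyi, add_smul, mul_smul]
    exact add_mem (Submodule.smul_mem _ y hx) (hm i hi)
  obtain ⟨t, rfl⟩ := (contractDual (F n) (I 0)).surjective g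
  obtain ⟨u, hu, w, hw⟩ := h.exists_mem_tensorCycles_sub_mem_range hd
    (fun _ i hi => (hS i hi).tensorExactAt) hX (mem_tensorCycles_iff.2 hg)
  refine ⟨contractDual (F n) (I 1) u z, fun x hx => ?_, ?_⟩
  · rw [← map_smul]
    exact mem_tensorCycles_iff.1 hu (hm x hx)
  · have := congrArg (fun s => contractDual (F n) (I 0) s z) hw
    simp only [contractDual_rTensor, map_sub, contractDual_lTensor, LinearMap.comp_apply, hz,
      map_zero, LinearMap.sub_apply] at this
    exact (sub_eq_zero.1 this.symm).symm

end Socle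

end Injective

section DerivedFunctors

open LinearMap Limits

variable {S : Type u} [CommRing S] {X : ModuleCat.{u} S} (P : ProjectiveResolution X)

/-- The modules of a projective resolution, as a family of types. -/
abbrev resolutionModule (n : ℕ) : Type u := P.complex.X n

/-- The differential of a projective resolution, as a family of linear maps. -/
abbrev differential (n : ℕ) : resolutionModule P (n + 1) →ₗ[S] resolutionModule P n :=
  (P.complex.d (n + 1) n).hom

/-- The augmentation of a projective resolution, as a linear map. -/
noncomputable abbrev augmentation : resolutionModule P 0 →ₗ[S] X := (P.π.f 0).hom

lemma isResolution_differential : IsResolution (differential P) (augmentation P) where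
  surjective := (ModuleCat.epi_iff_surjective (P.π.f 0)).1 inferInstance
  exact_zero := (ShortComplex.ShortExact.moduleCat_exact_iff_function_exact _).1 P.exact₀
  exact_succ n := (ShortComplex.ShortExact.moduleCat_exact_iff_function_exact _).1 (P.exact_succ n)

instance (n : ℕ) : Module.Projective S (P.complex.X n) :=
  (IsProjective.iff_projective _).2 (P.projective n)

lemma nontrivial_iff_not_isZero (M : ModuleCat.{u} S) : Nontrivial M ↔ ¬ IsZero M := by
  rw [ModuleCat.isZero_iff_subsingleton, not_subsingleton_iff_nontrivial]

lemma nontrivial_ext_iff (N : ModuleCat.{u} S) (n : ℕ) :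
    Nontrivial (((Ext S (ModuleCat S) n).obj (Opposite.op X)).obj N) ↔
      ¬ HomExactAt (differential P) N n := by
  rw [nontrivial_iff_not_isZero, (P.isoExt (R := S) n N).isZero_iff,
    ← HomologicalComplex.exactAt_iff_isZero_homology, not_iff_not]
  cases n with
  | zero =>
    rw [HomologicalComplex.exactAt_iff' _ 0 0 1 (by simp) (by simp),
      ShortComplex.moduleCat_exact_iff]
    have h0 : ((P.complex.linearYonedaObj S N).sc' 0 0 1).f = 0 :=
      (P.complex.linearYonedaObj S N).shape 0 0 (by simp)
    rw [h0]
    constructor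
    · intro h g hg
      obtain ⟨f, hf⟩ := h (ModuleCat.ofHom g) (ModuleCat.hom_ext hg)
      exact (congrArg ModuleCat.Hom.hom hf).symm
    · intro h g hg
      exact ⟨0, (ModuleCat.hom_ext (h (x := g.hom) (congrArg ModuleCat.Hom.hom hg))).symm⟩
  | succ n =>
    rw [HomologicalComplex.exactAt_iff' _ n (n + 1) (n + 2) (by simp) (by simp),
      ShortComplex.moduleCat_exact_iff]
    constructor
    · intro h g hg
      obtain ⟨f, hf⟩ := h (ModuleCat.ofHom g) (ModuleCat.hom_ext hg)
      exact ⟨f.hom, congrArg ModuleCat.Hom.hom hf⟩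
    · intro h g hg
      obtain ⟨f, hf⟩ := h (x := g.hom) (congrArg ModuleCat.Hom.hom hg)
      exact ⟨ModuleCat.ofHom f, ModuleCat.hom_ext hf⟩

open MonoidalCategory in
lemma nontrivial_tor_iff (Y : ModuleCat.{u} S) (n : ℕ) :
    Nontrivial (((Tor (ModuleCat S) n).obj Y).obj X) ↔
      ¬ TensorExactAt (differential P) Y n := by
  rw [nontrivial_iff_not_isZero, Tor_obj, (P.isoLeftDerivedObj _ n).isZero_iff]
  refine not_congr ((HomologicalComplex.exactAt_iff_isZero_homology _ _).symm.trans ?_)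
  cases n with
  | zero =>
    rw [tensorExactAt_zero_iff_surjective,
      HomologicalComplex.exactAt_iff' _ 1 0 0 (by simp) (by simp), ShortComplex.moduleCat_exact_iff]
    have h0 : ((((tensoringLeft (ModuleCat S)).obj Y).mapHomologicalComplex
      (ComplexShape.down ℕ)).obj P.complex).d 0 0 = 0 := HomologicalComplex.shape _ _ _ (by simp)
    exact ⟨fun h x => h x (LinearMap.congr_fun (congrArg ModuleCat.Hom.hom h0) x), fun h x _ => h x⟩
  | succ n =>
    rw [tensorExactAt_succ_iff_exact (isResolution_differential P).comp_eq_zero,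
      HomologicalComplex.exactAt_iff' _ (n + 2) (n + 1) n (by simp) (by simp),
      ShortComplex.ShortExact.moduleCat_exact_iff_function_exact]
    rfl

end DerivedFunctors

section FiniteResolution

variable {S : Type u} [CommRing S] [IsNoetherianRing S]

lemma fgModuleCat_projective (F : FGModuleCat.{u} S) [Module.Projective S F] : Projective F where
  factors {E X} f e he := by
    have he' : Function.Surjective e.hom.hom :=
      (ModuleCat.epi_iff_surjective _).1
        (inferInstanceAs (Epi ((forget₂ (FGModuleCat S) (ModuleCat S)).map e)))
    obtain ⟨g, hg⟩ := Module.projective_lifting_property e.hom.hom f.hom.hom he'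
    exact ⟨FGModuleCat.ofHom g, FGModuleCat.hom_ext hg⟩

lemma exists_free_epi (M : FGModuleCat.{u} S) :
    ∃ (F : FGModuleCat.{u} S) (_ : Module.Free S F) (f : F ⟶ M), Epi f := by
  obtain ⟨n, f, hf⟩ := Module.Finite.exists_fin' S M
  let g : FGModuleCat.of S (Fin n → S) ⟶ M := FGModuleCat.ofHom f
  refine ⟨_, inferInstanceAs (Module.Free S (Fin n → S)), g, ?_⟩
  have : Epi ((forget₂ (FGModuleCat S) (ModuleCat S)).map g) :=
    (ModuleCat.epi_iff_surjective _).2 hf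
  exact (forget₂ (FGModuleCat S) (ModuleCat S)).epi_of_epi_map this

instance : EnoughProjectives (FGModuleCat.{u} S) where
  presentation M := by
    obtain ⟨F, hF, f, hf⟩ := exists_free_epi M
    exact ⟨{ p := F, projective := fgModuleCat_projective F, f := f, epi := hf }⟩

instance : (forget₂ (FGModuleCat.{u} S) (ModuleCat.{u} S)).PreservesProjectiveObjects where
  projective_obj {P} _ := by
    obtain ⟨F, hF, f, hf⟩ := exists_free_epi P
    have : Projective ((forget₂ (FGModuleCat S) (ModuleCat S)).obj F) :=
      (IsProjective.iff_projective F).1 inferInstance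
    have r : Retract P F := { i := Projective.factorThru (𝟙 P) f, r := f }
    exact (r.map (forget₂ (FGModuleCat S) (ModuleCat S))).projective

lemma exists_projectiveResolution_finite (X : Type u) [AddCommGroup X] [Module S X]
    [Module.Finite S X] :
    ∃ P : ProjectiveResolution (ModuleCat.of S X), ∀ n, Module.Finite S (P.complex.X n) :=
  let P := projectiveResolution (FGModuleCat.of S X)
  ⟨(forget₂ (FGModuleCat S) (ModuleCat S)).mapProjectiveResolution P,
    fun n => inferInstanceAs (Module.Finite S (P.complex.X n))⟩

end FiniteResolution

section Annihilation

open LinearMap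

variable {S : Type u} [CommRing S] {X : ModuleCat.{u} S} (P : ProjectiveResolution X)

lemma smul_mem_homCoboundaries {N : Type u} [AddCommGroup N] [Module S N] {x : S}
    (hx : ∀ y : X, x • y = 0) {n : ℕ} {z : resolutionModule P n →ₗ[S] N}
    (hz : z ∘ₗ differential P n = 0) : x • z ∈ homCoboundaries (differential P) N n := by
  have hπ : (x • 𝟙 P.complex) ≫ P.π = 0 := by
    refine HomologicalComplex.to_single_hom_ext (ModuleCat.hom_ext (LinearMap.ext fun y => ?_))
    exact (map_smul (augmentation P) x y).trans (hx _)
  let s := ProjectiveResolution.liftHomotopyZero (x • 𝟙 P.complex) hπ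
  have hs := s.comm n
  cases n with
  | zero =>
    rw [Homotopy.dNext_zero_chainComplex, Homotopy.prevD_chainComplex] at hs
    refine LinearMap.ext fun y => ?_
    have hy : x • y = differential P 0 (s.hom 0 1 y) := by
      simpa using LinearMap.congr_fun (congrArg ModuleCat.Hom.hom hs) y
    rw [LinearMap.smul_apply, ← map_smul, hy]
    exact LinearMap.congr_fun hz _
  | succ n =>
    rw [Homotopy.dNext_succ_chainComplex, Homotopy.prevD_chainComplex] at hs
    refine ⟨z ∘ₗ (s.hom n (n + 1)).hom, LinearMap.ext fun y => ?_⟩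
    have hy : x • y = s.hom n (n + 1) (differential P n y) +
      differential P (n + 1) (s.hom (n + 1) (n + 2) y) := by
      simpa using LinearMap.congr_fun (congrArg ModuleCat.Hom.hom hs) y
    rw [LinearMap.smul_apply, ← map_smul, hy, map_add]
    exact (add_eq_left.2 (LinearMap.congr_fun hz _)).symm

variable {P}

lemma HomExactAt.subsingleton_ext {N : ModuleCat.{u} S} {n : ℕ}
    (h : HomExactAt (differential P) N n) : Subsingleton (Abelian.Ext X N n) := by
  refine subsingleton_of_forall_eq 0 fun α => ?_
  obtain ⟨f, hf, rfl⟩ := P.extMk_surjective α (n + 1) rfl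
  have hf' := h (x := f.hom) (congrArg ModuleCat.Hom.hom hf)
  cases n with
  | zero =>
    have : f = 0 := ModuleCat.hom_ext hf'
    subst this
    simp
  | succ n =>
    rw [P.extMk_eq_zero_iff f _ rfl hf n rfl]
    obtain ⟨g, hg⟩ := hf'
    exact ⟨ModuleCat.ofHom g, ModuleCat.hom_ext hg⟩

end Annihilation

section Local

open LinearMap IsLocalRing

variable {S : Type u} [CommRing S] [IsLocalRing S]

lemma smul_residueField_eq_zero {x : S} (hx : x ∈ maximalIdeal S) (y : ResidueField S) :
    x • y = 0 := by
  rw [Algebra.smul_def, ResidueField.algebraMap_eq, (residue_eq_zero_iff x).2 hx, zero_mul]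

lemma nontrivial_tor_residueField_iff
    (P : ProjectiveResolution (ModuleCat.of S (ResidueField S)))
    (N : Type u) [AddCommGroup N] [Module S N] (n : ℕ) :
    Nontrivial (((Tor (ModuleCat S) n).obj
      (ModuleCat.of S (ResidueField S))).obj (ModuleCat.of S N)) ↔
      ¬ TensorExactAt (differential P) N n := by
  let Q := projectiveResolution (ModuleCat.of S N)
  rw [nontrivial_tor_iff Q, not_iff_not]
  exact (isResolution_differential Q).tensorExactAt_comm (isResolution_differential P) n

variable [IsNoetherianRing S]

lemma length_le_ringKrullDim {rs : List S} (h : RingTheory.Sequence.IsRegular S rs) :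
    (rs.length : WithBot ℕ∞) ≤ ringKrullDim S := by
  have : Nontrivial (S ⧸ Ideal.ofList rs) := by
    refine Ideal.Quotient.nontrivial_iff.2 fun h' => h.top_ne_smul ?_
    rw [h', smul_eq_mul, Ideal.mul_top]
  rw [← ringKrullDim_add_length_eq_ringKrullDim_of_isRegular rs h]
  exact le_add_of_nonneg_left ringKrullDim_nonneg_of_nontrivial

lemma exists_not_subsingleton_ext_residueField :
    ∃ n : ℕ,
      ¬ Subsingleton (Abelian.Ext (ModuleCat.of S (ResidueField S)) (ModuleCat.of S S) n) := by
  by_contra! h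
  have hlt : maximalIdeal S • (⊤ : Submodule S S) < ⊤ := by
    rw [smul_eq_mul, Ideal.mul_top, lt_top_iff_ne_top]
    exact (maximalIdeal.isMaximal S).ne_top
  have hann : Module.annihilator S (ResidueField S) = maximalIdeal S := Ideal.annihilator_quotient
  have hsupp : Module.support S (ResidueField S) = PrimeSpectrum.zeroLocus (maximalIdeal S) := by
    rw [Module.support_eq_zeroLocus, hann]
  let r := (LTSeries.longestOf (PrimeSpectrum S)).length + 1
  have hr : ringKrullDim S < r := by
    rw [ringKrullDim, Order.krullDim_eq_length_of_finiteDimensionalOrder]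
    exact_mod_cast Nat.lt_succ_self _
  obtain ⟨rs, hlen, -, hrs⟩ := ModuleCat.exists_isRegular_of_exists_subsingleton_ext
    (maximalIdeal S) r (ModuleCat.of S S) hlt (ModuleCat.of S (ResidueField S)) hsupp fun i _ => h i
  exact hr.not_ge (hlen ▸ length_le_ringKrullDim hrs)

lemma exists_not_homExactAt (P : ProjectiveResolution (ModuleCat.of S (ResidueField S))) :
    ∃ n, ¬ HomExactAt (differential P) S n := by
  obtain ⟨n, hn⟩ := exists_not_subsingleton_ext_residueField (S := S)
  exact ⟨n, fun h => hn h.subsingleton_ext⟩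

lemma exists_moduleDepth_self_eq (P : ProjectiveResolution (ModuleCat.of S (ResidueField S))) :
    ∃ n : ℕ, moduleDepth S S = n ∧ ¬ HomExactAt (differential P) S n ∧
      ∀ i < n, HomExactAt (differential P) S i := by
  classical
  have hex := exists_not_homExactAt P
  have hmin (i) (hi : i < Nat.find hex) := not_not.1 (Nat.find_min hex hi)
  refine ⟨Nat.find hex, le_antisymm ?_ (le_sInf ?_), Nat.find_spec hex, hmin⟩
  · exact sInf_le ⟨_, rfl, (nontrivial_ext_iff P _ _).2 (Nat.find_spec hex)⟩
  · rintro _ ⟨i, rfl, hi⟩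
    exact_mod_cast not_lt.1 fun h => (nontrivial_ext_iff P _ _).1 hi (hmin i h)

variable {I : ℕ → Type u} [∀ j, AddCommGroup (I j)] [∀ j, Module S (I j)]
  [∀ j, Module.Injective S (I j)] {δ : ∀ j, I (j + 1) →ₗ[S] I j} {X : Type u} [AddCommGroup X]
  [Module S X] {φ : I 0 →ₗ[S] X}

lemma moduleDepth_le_moduleWidth (h : IsResolution δ φ) : moduleDepth S S ≤ moduleWidth S X := by
  obtain ⟨P, _⟩ := exists_projectiveResolution_finite (S := S) (ResidueField S)
  obtain ⟨n, hn, -, hmin⟩ := exists_moduleDepth_self_eq P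
  rw [hn]
  refine le_sInf ?_
  rintro _ ⟨i, rfl, hi⟩
  rw [nontrivial_tor_residueField_iff P] at hi
  exact_mod_cast not_lt.1 fun hin => hi <|
    h.tensorExactAt_of_homExactAt (isResolution_differential P).comp_eq_zero fun j hj =>
      hmin j (hj.trans_lt hin)

lemma moduleWidth_le_moduleDepth (h : IsResolution δ φ) {c : I 0}
    (hc : ∀ x ∈ maximalIdeal S, x • c = 0)
    (hc' : ∀ y : I 1, (∀ x ∈ maximalIdeal S, x • y = 0) → δ 0 y ≠ c) :
    moduleWidth S X ≤ moduleDepth S S := by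
  obtain ⟨P, _⟩ := exists_projectiveResolution_finite (S := S) (ResidueField S)
  obtain ⟨n, hn, hnS, hmin⟩ := exists_moduleDepth_self_eq P
  obtain ⟨z, hz, hz'⟩ := SetLike.not_le_iff_exists.1 hnS
  rw [hn]
  refine sInf_le ⟨n, rfl, (nontrivial_tor_residueField_iff P X n).2 fun hX => ?_⟩
  obtain ⟨y, hy, hyc⟩ := h.exists_smul_eq_zero_and_apply_eq
    (isResolution_differential P).comp_eq_zero hmin hX hz hz'
    (fun x hx => smul_mem_homCoboundaries P (smul_residueField_eq_zero hx) hz) hc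
  exact hc' y hy hyc

lemma moduleDepth_sub_moduleWidth_eq_zero (h : IsResolution δ φ) {c : I 0}
    (hc : ∀ x ∈ maximalIdeal S, x • c = 0)
    (hc' : ∀ y : I 1, (∀ x ∈ maximalIdeal S, x • y = 0) → δ 0 y ≠ c) :
    moduleDepth S S - moduleWidth S X = 0 := by
  rw [(moduleWidth_le_moduleDepth h hc hc').antisymm (moduleDepth_le_moduleWidth h)]
  obtain ⟨n, hn, -⟩ := exists_moduleDepth_self_eq
    (projectiveResolution (ModuleCat.of S (ResidueField S)))
  rw [hn]
  exact EReal.sub_self (EReal.natCast_ne_top n) (EReal.natCast_ne_bot n)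

end Local

section Surjectivity

open LinearMap

lemma exists_maximal_disjoint {α : Type*} [CompleteLattice α] [IsCompactlyGenerated α] (b : α) :
    ∃ a, Maximal (Disjoint · b) a := by
  obtain ⟨a, -, ha⟩ := zorn_le_nonempty₀ {a : α | Disjoint a b} (fun C hC hchain _ _ =>
    ⟨sSup C, hchain.directedOn.disjoint_sSup_left.2 hC, fun _ => le_sSup⟩) ⊥ disjoint_bot_left
  exact ⟨a, ha⟩

variable {R : Type u} [CommRing R] {I J : Type u} [AddCommGroup I] [Module R I] [AddCommGroup J]
  [Module R J] {φ : I →ₗ[R] J} {A : Submodule R I} (hA : Maximal (Disjoint · (ker φ)) A)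
include hA

lemma mem_of_maximal_disjoint_ker {y : I} (hy : ∀ r : R, r • φ y ∈ A.map φ → r • y = 0) :
    y ∈ A := by
  suffices Disjoint (A ⊔ Submodule.span R {y}) (ker φ) from
    hA.2 this le_sup_left (Submodule.mem_sup_right (Submodule.mem_span_singleton_self y))
  refine Submodule.disjoint_def.2 fun z hz hz' => ?_
  obtain ⟨b, hb, r, rfl⟩ : ∃ b ∈ A, ∃ r : R, b + r • y = z := by
    simpa [Submodule.mem_sup, Submodule.mem_span_singleton] using hz
  rw [mem_ker, map_add, map_smul] at hz'
  have hr : r • y = 0 := hy r ⟨-b, A.neg_mem hb, by rw [map_neg, neg_eq_of_add_eq_zero_right hz']⟩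
  rw [← map_smul, hr, map_zero, add_zero] at hz'
  rw [hr, add_zero, Submodule.disjoint_def.1 hA.prop b hb hz']

lemma eq_bot_of_disjoint_map [IsNoetherianRing R]
    (h : ∀ (p : PrimeSpectrum R) (c : J), (∀ x, x ∈ p.asIdeal ↔ x • c = 0) →
      ∃ y : I, (∀ x ∈ p.asIdeal, x • y = 0) ∧ ∃ s ∉ p.asIdeal, φ y = s • c)
    {C : Submodule R J} (hC : Disjoint C (A.map φ)) : C = ⊥ := by
  by_contra hne
  have : Nontrivial C := Submodule.nontrivial_iff_ne_bot.2 hne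
  obtain ⟨p, hp⟩ := associatedPrimes.nonempty R C
  obtain ⟨hprime, ⟨c, hcC⟩, hc⟩ := isAssociatedPrime_iff.1 hp
  have hpc (x) : x ∈ p ↔ x • c = 0 := by
    simp [hc, Submodule.mem_colon_singleton, ← Subtype.coe_inj]
  obtain ⟨y, hy, s, hs, hys⟩ := h ⟨p, hprime⟩ c hpc
  have hyC : φ y ∈ C := hys ▸ C.smul_mem s hcC
  have hyA : y ∈ A := mem_of_maximal_disjoint_ker hA fun r hr => by
    have hr' := Submodule.disjoint_def.1 hC _ (C.smul_mem r hyC) hr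
    rw [hys, ← mul_smul, ← hpc] at hr'
    exact hy r ((hprime.mem_or_mem hr').resolve_right hs)
  refine hs ((hpc s).2 ?_)
  rw [← hys]
  exact Submodule.disjoint_def.1 hC _ hyC ⟨y, hyA, rfl⟩

-- `φ` maps `A` isomorphically onto an essential submodule of `J`; the inverse extends to a map
-- `ψ : J → I`, which is injective and, by maximality of `A`, has image `A`.
lemma surjective_of_maximal_disjoint_ker [Module.Injective R I]
    (hess : ∀ C : Submodule R J, Disjoint C (A.map φ) → C = ⊥) : Function.Surjective φ := by
  obtain ⟨ψ, hψ⟩ : ∃ ψ : J →ₗ[R] I, ψ ∘ₗ φ ∘ₗ A.subtype = A.subtype :=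
    exists_comp_eq_of_ker_le _ _ fun x hx => Submodule.disjoint_def.1 hA.prop x x.2 hx
  replace hψ (x) (hx : x ∈ A) : ψ (φ x) = x := LinearMap.congr_fun hψ ⟨x, hx⟩
  have hker : ker (φ ∘ₗ ψ) = ⊥ := by
    refine hess _ (Submodule.disjoint_def.2 ?_)
    rintro _ hx ⟨x, hxA, rfl⟩
    rw [← hψ x hxA]
    exact hx
  have hrange : range ψ ≤ A := by
    refine hA.2 (Submodule.disjoint_def.2 ?_) fun x hx => ⟨φ x, hψ x hx⟩
    rintro _ ⟨x, rfl⟩ hx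
    rw [(Submodule.eq_bot_iff _).1 hker x hx, map_zero]
  exact fun j => ⟨ψ j, ker_eq_bot.1 hker (congrArg φ (hψ _ (hrange ⟨j, rfl⟩)))⟩

omit hA

lemma surjective_of_forall_prime [IsNoetherianRing R] [Module.Injective R I]
    (h : ∀ (p : PrimeSpectrum R) (c : J), (∀ x, x ∈ p.asIdeal ↔ x • c = 0) →
      ∃ y : I, (∀ x ∈ p.asIdeal, x • y = 0) ∧ ∃ s ∉ p.asIdeal, φ y = s • c) :
    Function.Surjective φ := by
  obtain ⟨A, hA⟩ := exists_maximal_disjoint (ker φ)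
  exact surjective_of_maximal_disjoint_ker hA fun C => eq_bot_of_disjoint_map hA h

end Surjectivity

section Localization

open IsLocalRing

variable {R : Type u} [CommRing R] {I J : Type u} [AddCommGroup I] [Module R I] [AddCommGroup J]
  [Module R J]

lemma exists_mk_eq_of_forall_smul_eq_zero {T : Submonoid R} {p : Ideal R} (hp : p.FG)
    {y : LocalizedModule T I} (hy : ∀ x ∈ p, x • y = 0) :
    ∃ (y₀ : I) (t : T), LocalizedModule.mk y₀ t = y ∧ ∀ x ∈ p, x • y₀ = 0 := by
  induction y using LocalizedModule.induction_on with
  | _ y₀ t =>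
  have : Module.Finite R p := Module.Finite.iff_fg.2 hp
  obtain ⟨s, hs⟩ := Module.Finite.exists_smul_of_comp_eq_of_isLocalizedModule T
    (LocalizedModule.mkLinearMap T I) (LinearMap.toSpanSingleton R I y₀ ∘ₗ p.subtype) 0 (by
      ext x
      have hx : LocalizedModule.mk (t • (x : R) • y₀) t = 0 := by
        rw [Submonoid.smul_def, ← LocalizedModule.smul'_mk, ← LocalizedModule.smul'_mk, hy x x.2,
          smul_zero]
      rw [LinearMap.comp_zero]
      exact (LocalizedModule.mk_cancel t _).symm.trans hx)
  refine ⟨s • y₀, s * t, LocalizedModule.mk_cancel_common_left s t y₀, fun x hx => ?_⟩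
  rw [smul_comm]
  simpa using LinearMap.congr_fun hs ⟨x, hx⟩

variable {p : Ideal R} [p.IsPrime]

lemma smul_mk_one_eq_zero_of_mem_maximalIdeal {c : I} (hc : ∀ x ∈ p, x • c = 0)
    {x : Localization.AtPrime p} (hx : x ∈ maximalIdeal (Localization.AtPrime p)) :
    x • LocalizedModule.mk c (1 : p.primeCompl) = 0 := by
  let K := LinearMap.ker (LinearMap.toSpanSingleton (Localization.AtPrime p) _
    (LocalizedModule.mk c (1 : p.primeCompl)))
  suffices maximalIdeal (Localization.AtPrime p) ≤ K from this hx
  rw [← Localization.AtPrime.map_eq_maximalIdeal, Ideal.map_le_iff_le_comap]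
  intro y hy
  change algebraMap R (Localization.AtPrime p) y • LocalizedModule.mk c (1 : p.primeCompl) = 0
  rw [algebraMap_smul, LocalizedModule.smul'_mk, hc y hy, LocalizedModule.zero_mk]

lemma exists_apply_eq_smul_of_localizedModule_map_eq (hp : p.FG) {φ : J →ₗ[R] I} {c : I}
    {y : LocalizedModule p.primeCompl J}
    (hy : ∀ x ∈ maximalIdeal (Localization.AtPrime p), x • y = 0)
    (hyc : LocalizedModule.map p.primeCompl φ y = LocalizedModule.mk c 1) :
    ∃ y₀ : J, (∀ x ∈ p, x • y₀ = 0) ∧ ∃ s ∉ p, φ y₀ = s • c := by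
  obtain ⟨y₀, t, rfl, hy₀⟩ := exists_mk_eq_of_forall_smul_eq_zero hp fun x hx => by
    rw [← hy (algebraMap R _ x) ((IsLocalization.AtPrime.to_map_mem_maximal_iff
      (Localization.AtPrime p) p x).2 hx), algebraMap_smul]
  rw [LocalizedModule.map_mk, LocalizedModule.mk_eq] at hyc
  obtain ⟨u, hu⟩ := hyc
  refine ⟨(u : R) • y₀, fun x hx => by rw [smul_comm, hy₀ x hx, smul_zero], (u * t : R),
    (u * t : p.primeCompl).2, ?_⟩
  rw [map_smul, mul_smul]
  simpa [Submonoid.smul_def] using hu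

lemma exists_localizedModule_map_ne_mk [IsNoetherianRing R] [Module.Injective R J]
    {φ : J →ₗ[R] I} (hφ : ¬ Function.Surjective φ) :
    ∃ (p : PrimeSpectrum R) (c : LocalizedModule p.asIdeal.primeCompl I),
      (∀ x ∈ maximalIdeal (Localization.AtPrime p.asIdeal), x • c = 0) ∧
      ∀ y, (∀ x ∈ maximalIdeal (Localization.AtPrime p.asIdeal), x • y = 0) →
        LocalizedModule.map p.asIdeal.primeCompl φ y ≠ c := by
  contrapose! hφ
  refine surjective_of_forall_prime fun p c hc => ?_
  obtain ⟨y, hy, hyc⟩ := hφ p (LocalizedModule.mk c 1) fun x hx =>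
    smul_mk_one_eq_zero_of_mem_maximalIdeal (fun x => (hc x).1) hx
  exact exists_apply_eq_smul_of_localizedModule_map_eq (IsNoetherian.noetherian _) hy hyc

end Localization

section GorensteinInjective

variable {R : Type u} [CommRing R] {M : Type u} [AddCommGroup M] [Module R M]

lemma IsGorensteinInjective.exists_injective_isResolution (hM : IsGorensteinInjective R M) :
    ∃ (I : ℕ → Type u) (_ : ∀ n, AddCommGroup (I n)) (_ : ∀ n, Module R (I n))
      (d : ∀ n, I (n + 1) →ₗ[R] I n) (ε : I 0 →ₗ[R] M),
      (∀ n, Module.Injective R (I n)) ∧ IsResolution d ε := by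
  obtain ⟨I, _, _, d, hI, hd, -, ⟨e⟩⟩ := hM
  let ε : I (-1 + 1 + 1) →ₗ[R] M := e.symm.toLinearMap ∘ₗ
    (d (-1 + 1)).codRestrict (LinearMap.ker (d (-1))) (hd (-1)).apply_apply_eq_zero
  have hε : Function.Surjective ε := fun m => by
    obtain ⟨x, hx⟩ := (hd (-1) (e m)).1 (e m).2
    exact ⟨x, e.symm_apply_eq.2 (Subtype.ext hx)⟩
  have hdε : Function.Exact (d (-1 + 1 + 1)) ε := fun x => by
    rw [← hd (-1 + 1) x]
    exact e.symm.map_eq_zero_iff.trans Subtype.ext_iff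
  exact ⟨fun n => I (n + 1 : ℕ), inferInstance, inferInstance, fun n => d (n + 1 : ℕ), ε,
    fun n => hI _, hε, hdε, fun n => hd (n + 1 : ℕ)⟩

theorem sup_depth_sub_width_eq_zero_of_gorensteinInjective_general [IsNoetherianRing R]
    [Nontrivial M] {I : ℕ → Type u} [∀ n, AddCommGroup (I n)] [∀ n, Module R (I n)]
    [∀ n, Module.Injective R (I n)] {d : ∀ n, I (n + 1) →ₗ[R] I n} {ε : I 0 →ₗ[R] M}
    (h : IsResolution d ε) :
    (⨆ p : PrimeSpectrum R,
        moduleDepth (Localization.AtPrime p.asIdeal) (Localization.AtPrime p.asIdeal) -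
          moduleWidth (Localization.AtPrime p.asIdeal)
            (LocalizedModule p.asIdeal.primeCompl M)) = 0 := by
  have hinj (p : PrimeSpectrum R) (n : ℕ) : Module.Injective (Localization.AtPrime p.asIdeal)
      (LocalizedModule p.asIdeal.primeCompl (I n)) :=
    Module.injective_of_isLocalizedModule p.asIdeal.primeCompl
      (LocalizedModule.mkLinearMap p.asIdeal.primeCompl (I n))
  have hp (p : PrimeSpectrum R) := h.localizedModule p.asIdeal.primeCompl
  obtain ⟨p, c, hc, hc'⟩ := exists_localizedModule_map_ne_mk h.not_surjective
  refine le_antisymm (iSup_le fun q => EReal.sub_nonpos.2 (moduleDepth_le_moduleWidth (hp q))) ?_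
  exact le_iSup_of_le p (moduleDepth_sub_moduleWidth_eq_zero (hp p) hc hc').ge

end GorensteinInjective

/-- Let `R` be a commutative noetherian ring and `M` a nonzero Gorenstein injective
`R`-module.  Then `sup { depth R_p − width_{R_p} M_p | p ∈ Spec R } = 0`. -/
theorem sup_depth_sub_width_eq_zero_of_gorensteinInjective
    (R : Type u) [CommRing R] [IsNoetherianRing R]
    (M : Type u) [AddCommGroup M] [Module R M] [Nontrivial M]
    (hM : IsGorensteinInjective R M) :
    (⨆ p : PrimeSpectrum R,
        moduleDepth (Localization.AtPrime p.asIdeal) (Localization.AtPrime p.asIdeal) -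
          moduleWidth (Localization.AtPrime p.asIdeal)
            (LocalizedModule p.asIdeal.primeCompl M)) = 0 := by
  obtain ⟨I, _, _, d, ε, _, h⟩ := hM.exists_injective_isResolution
  exact sup_depth_sub_width_eq_zero_of_gorensteinInjective_general h
end

section
/- Let R be a commutative noetherian ring and M an R-module admitting an exact sequence ⋯ → E_2 → E_1 → E_0 → M → 0 in which every E_i is an injective R-module. Then for every prime ideal p of R and every R_p-module T of finite projective dimension, Ext^i_{R_p}(T, M_p) = 0 for all i ≥ 1. -/
/-!
If `N` has a left resolution by injectives with syzygies `Z₀ = N, Z₁, Z₂, …`, dimension shifting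
gives `Ext^i(T, N) ≅ Ext^{i+k}(T, Z_k)` for `i ≥ 1` and all `k`, and the right-hand side vanishes
once `i + k` exceeds the projective dimension of `T`. Over a noetherian ring, localization is exact
and preserves injectivity, so `N = S⁻¹M` inherits such a resolution from `M`.
-/

open CategoryTheory

universe u

/-- `T` has finite projective dimension over `S`: there is a projective resolution
`0 → P n → ⋯ → P 0 → T → 0` of finite length. -/
def HasFiniteProjectiveDimension (S : Type u) [CommRing S]
    (T : Type u) [AddCommGroup T] [Module S T] : Prop :=
  ∃ (n : ℕ) (P : ℕ → Type u) (_ : ∀ j, AddCommGroup (P j)) (_ : ∀ j, Module S (P j))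
    (ε : P 0 →ₗ[S] T) (d : ∀ j, P (j + 1) →ₗ[S] P j),
    (∀ j ≤ n, Module.Projective S (P j)) ∧
    (∀ j, n < j → Subsingleton (P j)) ∧
    Function.Surjective ε ∧ Function.Exact (d 0) ε ∧
    ∀ j, Function.Exact (d (j + 1)) (d j)

universe w v

section AbelianCategory

variable {C : Type*} [Category* C] [Abelian C] [HasExt.{w} C]

lemma subsingleton_ext_X₃_of_shortExact {S : ShortComplex C} (hS : S.ShortExact) (X : C) (n : ℕ)
    (h₂ : Subsingleton (Abelian.Ext X S.X₂ n)) (h₁ : Subsingleton (Abelian.Ext X S.X₁ (n + 1))) :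
    Subsingleton (Abelian.Ext X S.X₃ n) := by
  refine subsingleton_of_forall_eq 0 fun x ↦ ?_
  obtain ⟨y, rfl⟩ := Abelian.Ext.covariant_sequence_exact₃ X hS x rfl (Subsingleton.elim _ _)
  rw [Subsingleton.elim y 0, Abelian.Ext.zero_comp]

lemma subsingleton_leftDerivedExt_of_subsingleton_abelianExt (A : Type*) [Ring A] [Linear A C]
    [EnoughProjectives C] {X Y : C} {n : ℕ} (h : Subsingleton (Abelian.Ext X Y (n + 1))) :
    Subsingleton (((Ext A C (n + 1)).obj (Opposite.op X)).obj Y) := by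
  let P := projectiveResolution X
  have hexact : (P.complex.linearYonedaObj A Y).ExactAt (n + 1) := by
    rw [HomologicalComplex.exactAt_iff' _ n (n + 1) (n + 2) (by simp) (by simp),
      ShortComplex.moduleCat_exact_iff]
    intro (f : P.complex.X (n + 1) ⟶ Y) hf
    exact (P.extMk_eq_zero_iff f (n + 2) rfl hf n rfl).1 (Subsingleton.elim _ _)
  rw [← ModuleCat.isZero_iff_subsingleton]
  exact hexact.isZero_homology.of_iso (P.isoExt (n + 1) Y)

end AbelianCategory

/-- Exactness of the sequence `⋯ → E 2 → E 1 → E 0 → M → 0` with augmentation `ε : E 0 → M` and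
differentials `d j : E (j + 1) → E j`, i.e. `E` is a left resolution of `M`. -/
structure IsLeftResolution {A : Type*} [Ring A] {M : Type*} [AddCommGroup M] [Module A M]
    (E : ℕ → Type*) [∀ j, AddCommGroup (E j)] [∀ j, Module A (E j)]
    (ε : E 0 →ₗ[A] M) (d : ∀ j, E (j + 1) →ₗ[A] E j) : Prop where
  surjective : Function.Surjective ε
  exact_augmentation : Function.Exact (d 0) ε
  exact : ∀ j, Function.Exact (d (j + 1)) (d j)

namespace IsLeftResolution

lemma ker_augmentation {A : Type*} [Ring A] {M : Type*} [AddCommGroup M] [Module A M]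
    {E : ℕ → Type*} [∀ j, AddCommGroup (E j)] [∀ j, Module A (E j)]
    {ε : E 0 →ₗ[A] M} {d : ∀ j, E (j + 1) →ₗ[A] E j} (h : IsLeftResolution E ε d) :
    IsLeftResolution (fun j ↦ E (j + 1))
      ((d 0).codRestrict (LinearMap.ker ε) h.exact_augmentation.apply_apply_eq_zero)
      fun j ↦ d (j + 1) where
  surjective := fun ⟨y, hy⟩ ↦ by
    obtain ⟨x, rfl⟩ := (h.exact_augmentation y).1 hy
    exact ⟨x, rfl⟩
  exact_augmentation x := by
    rw [← h.exact 0 x, Subtype.ext_iff]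
    rfl
  exact j := h.exact (j + 1)

lemma localizedModule {R : Type*} [CommRing R] {M : Type*} [AddCommGroup M] [Module R M]
    {E : ℕ → Type*} [∀ j, AddCommGroup (E j)] [∀ j, Module R (E j)]
    {ε : E 0 →ₗ[R] M} {d : ∀ j, E (j + 1) →ₗ[R] E j} (h : IsLeftResolution E ε d)
    (S : Submonoid R) :
    IsLeftResolution (fun j ↦ LocalizedModule S (E j)) (LocalizedModule.map S ε)
      fun j ↦ LocalizedModule.map S (d j) where
  surjective := LocalizedModule.map_surjective S ε h.surjective
  exact_augmentation := LocalizedModule.map_exact S _ _ h.exact_augmentation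
  exact j := LocalizedModule.map_exact S _ _ (h.exact j)

section Ext

variable {A : Type u} [Ring A] {M : Type v} [AddCommGroup M] [Module A M]
  {E : ℕ → Type v} [∀ j, AddCommGroup (E j)] [∀ j, Module A (E j)]
  {ε : E 0 →ₗ[A] M} {d : ∀ j, E (j + 1) →ₗ[A] E j}

lemma hasProjectiveDimensionLT (h : IsLeftResolution E ε d) (n : ℕ)
    (hproj : ∀ j < n, Module.Projective A (E j)) (hzero : Subsingleton (E n)) :
    HasProjectiveDimensionLT (ModuleCat.of A M) n := by
  induction n generalizing M E with
  | zero =>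
    have : Subsingleton M := h.surjective.subsingleton
    exact (ModuleCat.isZero_of_subsingleton _).hasProjectiveDimensionLT_zero
  | succ n ih =>
    have hker : HasProjectiveDimensionLT (ModuleCat.of A (LinearMap.ker ε)) n :=
      ih h.ker_augmentation (fun j hj ↦ hproj (j + 1) (by lia)) hzero
    have : Projective (ModuleCat.of A (E 0)) :=
      have := hproj 0 n.succ_pos
      ModuleCat.projective_of_categoryTheory_projective _
    exact (LinearMap.shortExact_shortComplexKer h.surjective).hasProjectiveDimensionLT_X₃ n hker
      (hasProjectiveDimensionLT_of_ge _ 1 _ (by lia))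

lemma subsingleton_ext_of_injective [Small.{v} A] (h : IsLeftResolution E ε d)
    (hinj : ∀ j, Module.Injective A (E j)) (X : ModuleCat.{v} A) (n : ℕ)
    [HasProjectiveDimensionLT X n] (i : ℕ) :
    Subsingleton (Abelian.Ext X (ModuleCat.of A M) (i + 1)) := by
  obtain ⟨k, hk⟩ : ∃ k, n ≤ i + k := ⟨n, by lia⟩
  induction k generalizing M E i with
  | zero => exact HasProjectiveDimensionLT.subsingleton X n (i + 1) (by lia) _
  | succ k ih =>
    have hker : Subsingleton (Abelian.Ext X (ModuleCat.of A (LinearMap.ker ε)) (i + 2)) :=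
      ih h.ker_augmentation (fun j ↦ hinj (j + 1)) (i + 1) (by lia)
    have := hinj 0
    have : Injective (ModuleCat.of A (E 0)) := Module.injective_object_of_injective_module A (E 0)
    exact subsingleton_ext_X₃_of_shortExact (LinearMap.shortExact_shortComplexKer h.surjective)
      X (i + 1) (Abelian.Ext.subsingleton_of_injective X _ i) hker

end Ext

end IsLeftResolution

lemma HasFiniteProjectiveDimension.exists_hasProjectiveDimensionLT {A : Type u} [CommRing A]
    {T : Type u} [AddCommGroup T] [Module A T] (hT : HasFiniteProjectiveDimension A T) :
    ∃ n, HasProjectiveDimensionLT (ModuleCat.of A T) n := by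
  obtain ⟨n, P, _, _, ε, d, hproj, hzero, hsurj, hex0, hex⟩ := hT
  have hP : IsLeftResolution P ε d := ⟨hsurj, hex0, hex⟩
  exact ⟨n + 1, hP.hasProjectiveDimensionLT (n + 1) (fun j hj ↦ hproj j (by lia))
    (hzero (n + 1) n.lt_succ_self)⟩

theorem ext_subsingleton_of_injective_resolution_of_finite_projdim_general
    {R : Type u} [CommRing R] [IsNoetherianRing R] {M : Type u} [AddCommGroup M] [Module R M]
    {E : ℕ → Type u} [∀ j, AddCommGroup (E j)] [∀ j, Module R (E j)]
    (hE : ∀ j, Module.Injective R (E j)) {ε : E 0 →ₗ[R] M} {d : ∀ j, E (j + 1) →ₗ[R] E j}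
    (hres : IsLeftResolution E ε d) (S : Submonoid R)
    {T : Type u} [AddCommGroup T] [Module (Localization S) T]
    (hT : HasFiniteProjectiveDimension (Localization S) T) {i : ℕ} (hi : 1 ≤ i) :
    Subsingleton
      (((Ext (Localization S) (ModuleCat (Localization S)) i).obj
        (Opposite.op (ModuleCat.of (Localization S) T))).obj
          (ModuleCat.of (Localization S) (LocalizedModule S M))) := by
  obtain ⟨i, rfl⟩ := Nat.exists_eq_add_of_le' hi
  obtain ⟨n, _⟩ := hT.exists_hasProjectiveDimensionLT
  have hinj (j : ℕ) : Module.Injective (Localization S) (LocalizedModule S (E j)) :=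
    have := hE j
    Module.injective_of_isLocalizedModule S (LocalizedModule.mkLinearMap S (E j))
  exact subsingleton_leftDerivedExt_of_subsingleton_abelianExt (Localization S)
    ((hres.localizedModule S).subsingleton_ext_of_injective hinj (ModuleCat.of _ T) n i)

/-- Let `R` be a commutative noetherian ring and `M` an `R`-module with an exact sequence
`⋯ → E 2 → E 1 → E 0 → M → 0` of injective `R`-modules.  Then for every prime ideal `p`
of `R` and every `R_p`-module `T` of finite projective dimension,
`Ext^i_{R_p}(T, M_p) = 0` for all `i ≥ 1`. -/
theorem ext_subsingleton_of_injective_resolution_of_finite_projdim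
    (R : Type u) [CommRing R] [IsNoetherianRing R]
    (M : Type u) [AddCommGroup M] [Module R M]
    (E : ℕ → Type u) [∀ j, AddCommGroup (E j)] [∀ j, Module R (E j)]
    (hE : ∀ j, Module.Injective R (E j))
    (ε : E 0 →ₗ[R] M) (d : ∀ j, E (j + 1) →ₗ[R] E j)
    (hsurj : Function.Surjective ε) (hex0 : Function.Exact (d 0) ε)
    (hex : ∀ j, Function.Exact (d (j + 1)) (d j))
    (p : Ideal R) [p.IsPrime]
    (T : Type u) [AddCommGroup T] [Module (Localization.AtPrime p) T]
    (hT : HasFiniteProjectiveDimension (Localization.AtPrime p) T)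
    (i : ℕ) (hi : 1 ≤ i) :
    Subsingleton
      (((Ext (Localization.AtPrime p) (ModuleCat (Localization.AtPrime p)) i).obj
        (Opposite.op (ModuleCat.of (Localization.AtPrime p) T))).obj
          (ModuleCat.of (Localization.AtPrime p) (LocalizedModule p.primeCompl M))) :=
  ext_subsingleton_of_injective_resolution_of_finite_projdim_general
    hE ⟨hsurj, hex0, hex⟩ p.primeCompl hT hi
end
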